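/- arXiv:0708.3424 — 2 statements merged into one kernel-verified Lean document; each statement's English description precedes it below -/
import Mathlib

section
/- Let f : X ⟶ Y be a finite surjective morphism of schemes, where Y is a noetherian scheme. If X is an affine scheme, then Y is an affine scheme. -/
open AlgebraicGeometry

/-!
By noetherian induction all closed subschemes `V(K)` with `K ≠ ⊥` are affine, and by Serre's
criterion it suffices that global functions on each `V(K)` extend to `Y`.

If `I * J = ⊥` with `I, J ≠ ⊥`, a function on `V(K)` extends to the affine `V(K * I)`, so we may
assume `K * J = ⊥`. It is then glued with a function on `V(J)` to one on `V(K ⊓ J)`, where `K ⊓ J`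
has square zero. Lifting from there is obstructed by a cocycle with values in `K ⊓ J`, and the
functions on `V(K ⊓ J)` which split it form an ideal with empty zero locus.

Otherwise `Y` is integral, and `f_* 𝒪_X` has a unital `𝒪_Y`-linear functional `l` to the constant
sheaf of rational functions on `Y`. The conductor of `l` into `K` is an ideal of the affine scheme
`X` defining a closed subscheme with proper image in `Y`. A function on that image lifts to a global
function `b` on `X`, and `l b` is a global function on `Y` with the prescribed values on `V(K)`.
-/

namespace Chevalley

universe u

open CategoryTheory TopologicalSpace Scheme

section Sections

variable {X Y : Scheme.{u}} {U V W : Y.Opens}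

/-- Restriction of sections along an inclusion of opens, as a ring homomorphism. -/
noncomputable def res (h : U ≤ V) : Γ(Y, V) →+* Γ(Y, U) :=
  (Y.presheaf.map (homOfLE h).op).hom

lemma res_res (h : U ≤ V) (h' : V ≤ W) (x : Γ(Y, W)) :
    res h (res h' x) = res (h.trans h') x := by
  simp only [res, ← CommRingCat.comp_apply, ← Functor.map_comp]
  rfl

lemma res_self (h : U ≤ U) (x : Γ(Y, U)) : res h x = x :=
  congr($(Y.presheaf.map_id _) x)

lemma app_res (f : X ⟶ Y) (h : U ≤ V) (x : Γ(Y, V)) :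
    f.app U (res h x) = res (f.preimage_mono h) (f.app V x) := by
  simp only [res, ← CommRingCat.comp_apply]
  rw [f.naturality]
  rfl

lemma basicOpen_res (h : U ≤ V) (x : Γ(Y, V)) :
    Y.basicOpen (res h x) = U ⊓ Y.basicOpen x :=
  Y.basicOpen_res _ _

lemma mem_basicOpen_app (f : X ⟶ Y) (a : Γ(Y, U)) (x : X) :
    x ∈ X.basicOpen (f.app U a) ↔ f x ∈ Y.basicOpen a := by
  rw [← Scheme.preimage_basicOpen]
  rfl

lemma eq_of_forall_res_eq {κ : Type*} (U : κ → Y.Opens) (hU : ∀ i, U i ≤ V)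
    (hV : V ≤ ⨆ i, U i) {x y : Γ(Y, V)} (h : ∀ i, res (hU i) x = res (hU i) y) : x = y :=
  Y.sheaf.eq_of_locally_eq' U V (fun i ↦ homOfLE (hU i)) hV x y h

lemma exists_glue {κ : Type*} (U : κ → Y.Opens) (hU : ⨆ i, U i = ⊤) (x : ∀ i, Γ(Y, U i))
    (h : ∀ i j, res (inf_le_left : U i ⊓ U j ≤ U i) (x i) =
      res (inf_le_right : U i ⊓ U j ≤ U j) (x j)) :
    ∃ y : Γ(Y, ⊤), ∀ i, res le_top y = x i := by
  obtain ⟨y, hy, -⟩ := Y.sheaf.existsUnique_gluing' U ⊤ (fun i ↦ homOfLE le_top) hU.ge x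
    (fun i j ↦ h i j)
  exact ⟨y, hy⟩

lemma iSup_preimage_eq_top (f : X ⟶ Y) {κ : Type*} {U : κ → Y.Opens} (hU : ⨆ i, U i = ⊤) :
    ⨆ i, f ⁻¹ᵁ U i = ⊤ := by
  rw [← f.preimage_iSup, hU, f.preimage_top]

lemma exists_isAffineOpen_mem_le {y : Y} (hy : y ∈ U) :
    ∃ V : Y.affineOpens, y ∈ V.1 ∧ V.1 ≤ U := by
  obtain ⟨_, ⟨V, hV, rfl⟩, hyV, hVU⟩ := Y.isBasis_affineOpens.exists_subset_of_mem_open hy U.2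
  exact ⟨⟨V, hV⟩, hyV, hVU⟩

lemma le_iSup_affineOpens_le (U : Y.Opens) :
    U ≤ ⨆ V : {V : Y.affineOpens // V.1 ≤ U}, (V.1 : Y.Opens) := fun _ hy ↦
  have ⟨V, hyV, hVU⟩ := exists_isAffineOpen_mem_le hy
  Opens.mem_iSup.mpr ⟨⟨V, hVU⟩, hyV⟩

lemma exists_finite_affine_cover (Y : Scheme.{u}) [CompactSpace Y] :
    ∃ s : Finset Y.affineOpens, ⨆ i : s, (i.1 : Y.Opens) = ⊤ := by
  obtain ⟨t, ht⟩ := CompleteLattice.IsCompactElement.exists_finset_of_le_iSup (Y.Opens)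
    ((Opens.isCompactElement_iff _).mpr isCompact_univ)
    (fun i : Y.affineOpens ↦ (i : Y.Opens)) (iSup_affineOpens_eq_top Y).ge
  refine ⟨t, top_le_iff.mp (ht.trans ?_)⟩
  rw [iSup_subtype']

lemma exists_basicOpen_le [IsAffine Y] {y : Y} (hy : y ∈ U) :
    ∃ r : Γ(Y, ⊤), y ∈ Y.basicOpen r ∧ Y.basicOpen r ≤ U := by
  obtain ⟨_, ⟨_, ⟨r, rfl⟩, rfl⟩, hyr, hr⟩ :=
    (isBasis_basicOpen Y).exists_subset_of_mem_open hy U.2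
  exact ⟨r, hyr, hr⟩

lemma isAffineOpen_basicOpen_of_le (hU : IsAffineOpen U) (a : Γ(Y, ⊤)) (h : Y.basicOpen a ≤ U) :
    IsAffineOpen (Y.basicOpen a) := by
  have := hU.basicOpen (res le_top a)
  rwa [basicOpen_res, inf_eq_right.mpr h] at this

lemma eventually_pow_mul_eq_zero (hU : IsCompact (U : Set Y)) {x f : Γ(Y, U)}
    (h : res (Y.basicOpen_le f) x = 0) : ∀ᶠ n : ℕ in Filter.atTop, f ^ n * x = 0 := by
  obtain ⟨m, hm⟩ := exists_pow_mul_eq_zero_of_res_basicOpen_eq_zero_of_isCompact Y hU x f h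
  filter_upwards [Filter.eventually_ge_atTop m] with n hn
  rw [← Nat.sub_add_cancel hn, pow_add, mul_assoc, hm, mul_zero]

end Sections

section IdealSheaf

variable {Y : Scheme.{u}}

lemma exists_res_eq_pow_mul {U : Y.Opens} (hU : IsAffineOpen U) (f : Γ(Y, U))
    (x : Γ(Y, Y.basicOpen f)) : ∃ (n : ℕ) (y : Γ(Y, U)),
      res (Y.basicOpen_le f) y = res (Y.basicOpen_le f) f ^ n * x :=
  exists_eq_pow_mul_of_isAffineOpen Y U hU f x

lemma res_mem_ideal (I : Y.IdealSheafData) {U V : Y.affineOpens} (h : U.1 ≤ V.1) {x : Γ(Y, V)}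
    (hx : x ∈ I.ideal V) : res h x ∈ I.ideal U :=
  I.ideal_le_comap_ideal h hx

lemma res_mem_ideal_basicOpen_iff (I : Y.IdealSheafData) (U : Y.affineOpens) (f x : Γ(Y, U)) :
    res (Y.basicOpen_le f) x ∈ I.ideal (Y.affineBasicOpen f) ↔ ∃ n : ℕ, f ^ n * x ∈ I.ideal U := by
  have := U.2.isLocalization_basicOpen f
  rw [← I.map_ideal_basicOpen]
  refine (IsLocalization.algebraMap_mem_map_algebraMap_iff (Submonoid.powers f) _ _ _).trans ?_
  simp [Submonoid.mem_powers_iff]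

lemma eventually_exists_mem_ideal_res_eq (I : Y.IdealSheafData) (U : Y.affineOpens) (f : Γ(Y, U))
    {x : Γ(Y, Y.basicOpen f)} (hx : x ∈ I.ideal (Y.affineBasicOpen f)) :
    ∀ᶠ n : ℕ in Filter.atTop, ∃ y ∈ I.ideal U,
      res (Y.basicOpen_le f) y = res (Y.basicOpen_le f) f ^ n * x := by
  obtain ⟨m, z, hz⟩ := exists_res_eq_pow_mul U.2 f x
  obtain ⟨k, hk⟩ := (res_mem_ideal_basicOpen_iff I U f z).mp (hz ▸ Ideal.mul_mem_left _ _ hx)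
  filter_upwards [Filter.eventually_ge_atTop (k + m)] with n hn
  refine ⟨f ^ (n - (k + m)) * (f ^ k * z), Ideal.mul_mem_left _ _ hk, ?_⟩
  rw [map_mul, map_mul, hz, map_pow, map_pow, ← mul_assoc, ← mul_assoc, ← pow_add, ← pow_add]
  congr 2
  lia

lemma app_subschemeι_eq_zero_iff (I : Y.IdealSheafData) (U : Y.Opens) (x : Γ(Y, U)) :
    I.subschemeι.app U x = 0 ↔
      ∀ (V : Y.affineOpens) (hV : V.1 ≤ U), res hV x ∈ I.ideal V := by
  have mem_ideal_iff (V : Y.affineOpens) (hV : V.1 ≤ U) :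
      res hV x ∈ I.ideal V ↔ res (I.subschemeι.preimage_mono hV) (I.subschemeι.app U x) = 0 := by
    rw [← I.ker_subschemeι_app V, ← app_res]
    rfl
  simp only [mem_ideal_iff]
  refine ⟨fun h V hV ↦ by rw [h, map_zero], fun h ↦ ?_⟩
  refine eq_of_forall_res_eq (fun V : {V : Y.affineOpens // V.1 ≤ U} ↦ I.subschemeι ⁻¹ᵁ V.1.1)
    (fun V ↦ I.subschemeι.preimage_mono V.2) ?_ fun V ↦ by rw [h V.1 V.2, map_zero]
  rw [← I.subschemeι.preimage_iSup]
  exact I.subschemeι.preimage_mono (le_iSup_affineOpens_le U)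

lemma mem_ideal_iff_app_subschemeι_eq_zero (I : Y.IdealSheafData) (U : Y.affineOpens)
    (x : Γ(Y, U)) : x ∈ I.ideal U ↔ I.subschemeι.app U x = 0 := by
  rw [← I.ker_subschemeι_app U]
  rfl

lemma exists_subschemeι_eq {I : Y.IdealSheafData} {y : Y} (hy : y ∈ I.support) :
    ∃ z, I.subschemeι z = y := by
  rwa [← Set.mem_range, IdealSheafData.range_subschemeι]

lemma vanishingIdeal_ne_bot {Z : Closeds Y} (hZ : Z ≠ ⊤) :
    IdealSheafData.vanishingIdeal Z ≠ ⊥ := by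
  intro h
  have h' := IdealSheafData.coe_support_vanishingIdeal Z
  rw [h] at h'
  exact hZ (SetLike.coe_injective h').symm

lemma appTop_surjective_of_isAffine {Z W : Scheme.{u}} [IsAffine W] (f : Z ⟶ W)
    [IsClosedImmersion f] : Function.Surjective f.appTop :=
  (IsClosedImmersion.isAffine_surjective_of_isAffine f).2

instance isClosedImmersion_inclusion {I J : Y.IdealSheafData} (h : I ≤ J) :
    IsClosedImmersion (IdealSheafData.inclusion h) := by
  have : IsClosedImmersion (IdealSheafData.inclusion h ≫ I.subschemeι) := by
    rw [IdealSheafData.inclusion_subschemeι]; infer_instance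
  exact IsClosedImmersion.of_comp _ I.subschemeι

end IdealSheaf

section Lift

variable {Y Z : Scheme.{u}}

/-- A section `x` of `Y` over `U` lifts the global section `s` of `Z` along `f : Z ⟶ Y` if its
pullback to `f ⁻¹ᵁ U` is the restriction of `s`. -/
def IsLift (f : Z ⟶ Y) (s : Γ(Z, ⊤)) {U : Y.Opens} (x : Γ(Y, U)) : Prop :=
  f.app U x = res le_top s

lemma isLift_comp_iff {X Y Z : Scheme.{u}} {g : Z ⟶ X} {f : X ⟶ Y} {s : Γ(Z, ⊤)} {U : Y.Opens}
    {x : Γ(Y, U)} : IsLift (g ≫ f) s x ↔ IsLift g s (f.app U x) := by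
  rw [IsLift, Scheme.Hom.comp_app]
  rfl

namespace IsLift

variable {f : Z ⟶ Y} {s t : Γ(Z, ⊤)} {U V : Y.Opens} {x y : Γ(Y, V)}

lemma restrict (h : IsLift f s x) (hUV : U ≤ V) : IsLift f s (res hUV x) := by
  rw [IsLift, app_res, h, res_res]

lemma add (hx : IsLift f s x) (hy : IsLift f t y) : IsLift f (s + t) (x + y) := by
  rw [IsLift, map_add, map_add, hx, hy]

lemma sub (hx : IsLift f s x) (hy : IsLift f t y) : IsLift f (s - t) (x - y) := by
  rw [IsLift, map_sub, map_sub, hx, hy]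

lemma mul (hx : IsLift f s x) (hy : IsLift f t y) : IsLift f (s * t) (x * y) := by
  rw [IsLift, map_mul, map_mul, hx, hy]

lemma pow (hx : IsLift f s x) (n : ℕ) : IsLift f (s ^ n) (x ^ n) := by
  rw [IsLift, map_pow, map_pow, hx]

lemma one : IsLift f 1 (1 : Γ(Y, V)) := by
  rw [IsLift, map_one, map_one]

lemma comp {W : Scheme.{u}} {g : W ⟶ Z} {h : W ⟶ Y} (e : g ≫ f = h) (hx : IsLift f s x) :
    IsLift h (g.appTop s) x := by
  subst e
  rw [isLift_comp_iff, IsLift, hx]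
  exact app_res g le_top s

lemma mem_basicOpen_iff (hx : IsLift f s x) {z : Z} (hz : f z ∈ V) :
    f z ∈ Y.basicOpen x ↔ z ∈ Z.basicOpen s := by
  rw [← mem_basicOpen_app, hx, basicOpen_res]
  exact and_iff_right hz

lemma eq_of_cover {κ : Type*} {W : κ → Y.Opens} (hW : ⨆ i, W i = ⊤) {x : ∀ i, Γ(Y, W i)}
    (hs : ∀ i, IsLift f s (x i)) (ht : ∀ i, IsLift f t (x i)) : s = t :=
  eq_of_forall_res_eq (fun i ↦ f ⁻¹ᵁ W i) (fun _ ↦ le_top) (iSup_preimage_eq_top f hW).ge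
    fun i ↦ (hs i).symm.trans (ht i)

end IsLift

lemma isLift_appTop (f : Z ⟶ Y) (x : Γ(Y, ⊤)) : IsLift f (f.appTop x) x :=
  (res_self _ _).symm

lemma appTop_inclusion_appTop_subschemeι {I J : Y.IdealSheafData} (h : I ≤ J) (y : Γ(Y, ⊤)) :
    (IdealSheafData.inclusion h).appTop (I.subschemeι.appTop y) = J.subschemeι.appTop y :=
  have hy := (isLift_appTop I.subschemeι y).comp (IdealSheafData.inclusion_subschemeι h)
  ((res_self _ _).symm.trans hy.symm)

lemma IsLift.appTop_eq_of_cover {f : Z ⟶ Y} {s : Γ(Z, ⊤)} {κ : Type*} {W : κ → Y.Opens}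
    (hW : ⨆ i, W i = ⊤) {x : Γ(Y, ⊤)} (h : ∀ i, IsLift f s (res (le_top : W i ≤ ⊤) x)) :
    f.appTop x = s :=
  IsLift.eq_of_cover hW (fun _ ↦ (isLift_appTop f x).restrict le_top) h

variable {I : Y.IdealSheafData} {s : Γ(I.subscheme, ⊤)}

lemma exists_isLift (s : Γ(I.subscheme, ⊤)) (U : Y.affineOpens) :
    ∃ x : Γ(Y, U), IsLift I.subschemeι s x :=
  I.subschemeι_app_surjective U _

variable {U : Y.affineOpens} {x y : Γ(Y, U)}

lemma IsLift.sub_mem_ideal (hx : IsLift I.subschemeι s x) (hy : IsLift I.subschemeι s y) :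
    x - y ∈ I.ideal U := by
  rw [mem_ideal_iff_app_subschemeι_eq_zero, map_sub, hx, hy, sub_self]

lemma IsLift.of_sub_mem_ideal (hx : IsLift I.subschemeι s x) (h : x - y ∈ I.ideal U) :
    IsLift I.subschemeι s y := by
  rw [mem_ideal_iff_app_subschemeι_eq_zero, map_sub, sub_eq_zero] at h
  exact h.symm.trans hx

lemma isLift_zero_iff : IsLift I.subschemeι 0 x ↔ x ∈ I.ideal U := by
  rw [IsLift, map_zero, mem_ideal_iff_app_subschemeι_eq_zero]

lemma exists_isLift_of_sub_mem_ideal (I : Y.IdealSheafData) (x : ∀ U : Y.affineOpens, Γ(Y, U))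
    (h : ∀ (U V W : Y.affineOpens) (hU : W.1 ≤ U.1) (hV : W.1 ≤ V.1),
      res hU (x U) - res hV (x V) ∈ I.ideal W) :
    ∃ s : Γ(I.subscheme, ⊤), ∀ U, IsLift I.subschemeι s (x U) := by
  obtain ⟨s, hs⟩ := exists_glue (fun U : Y.affineOpens ↦ I.subschemeι ⁻¹ᵁ U.1)
    (iSup_preimage_eq_top _ (iSup_affineOpens_eq_top Y)) (fun U ↦ I.subschemeι.app U (x U))
    fun U V ↦ by
      refine (app_res _ inf_le_left _).symm.trans (.trans ?_ (app_res _ inf_le_right _))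
      rw [← sub_eq_zero, ← map_sub, app_subschemeι_eq_zero_iff]
      intro W hW
      rw [map_sub, res_res, res_res]
      exact h U V W (hW.trans inf_le_left) (hW.trans inf_le_right)
  exact ⟨s, fun U ↦ (hs U).symm⟩

end Lift

section Gluing

variable {Y : Scheme.{u}} {I J : Y.IdealSheafData}

/-- Since `I ⊓ J` is the kernel of `𝒪_Y → 𝒪_Y / I × 𝒪_Y / J`, the subscheme `V(I ⊓ J)` is the
pushout of `V(I)` and `V(J)` along `V(I ⊔ J)`. -/
lemma exists_appTop_inclusion_inf_eq (a : Γ(I.subscheme, ⊤)) (b : Γ(J.subscheme, ⊤))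
    (hab : (IdealSheafData.inclusion (le_sup_left : I ≤ I ⊔ J)).appTop a =
      (IdealSheafData.inclusion (le_sup_right : J ≤ I ⊔ J)).appTop b) :
    ∃ c : Γ((I ⊓ J).subscheme, ⊤),
      (IdealSheafData.inclusion (inf_le_left : I ⊓ J ≤ I)).appTop c = a ∧
      (IdealSheafData.inclusion (inf_le_right : I ⊓ J ≤ J)).appTop c = b := by
  have exists_common_lift (U : Y.affineOpens) : ∃ x : Γ(Y, U),
      IsLift I.subschemeι a x ∧ IsLift J.subschemeι b x := by
    obtain ⟨x, hx⟩ := exists_isLift a U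
    obtain ⟨y, hy⟩ := exists_isLift b U
    have hxy : x - y ∈ (I ⊔ J).ideal U :=
      (hx.comp (IdealSheafData.inclusion_subschemeι le_sup_left)).sub_mem_ideal
        (hab ▸ hy.comp (IdealSheafData.inclusion_subschemeι le_sup_right))
    obtain ⟨i, hi, j, hj, e⟩ := Submodule.mem_sup.mp hxy
    refine ⟨x - i, hx.of_sub_mem_ideal (by rwa [sub_sub_cancel]), hy.of_sub_mem_ideal ?_⟩
    rwa [show y - (x - i) = -j by linear_combination e, neg_mem_iff]
  choose x hxa hxb using exists_common_lift
  obtain ⟨c, hc⟩ := exists_isLift_of_sub_mem_ideal (I ⊓ J) x fun U V W hU hV ↦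
    ⟨((hxa U).restrict hU).sub_mem_ideal ((hxa V).restrict hV),
      ((hxb U).restrict hU).sub_mem_ideal ((hxb V).restrict hV)⟩
  have hY := iSup_affineOpens_eq_top Y
  exact ⟨c, IsLift.eq_of_cover hY (fun U ↦ (hc U).comp (IdealSheafData.inclusion_subschemeι _)) hxa,
    IsLift.eq_of_cover hY (fun U ↦ (hc U).comp (IdealSheafData.inclusion_subschemeι _)) hxb⟩

lemma appTop_inclusion_inf_le_left_surjective [IsAffine J.subscheme] :
    Function.Surjective (IdealSheafData.inclusion (inf_le_left : I ⊓ J ≤ I)).appTop := by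
  intro a
  obtain ⟨b, hb⟩ := appTop_surjective_of_isAffine
    (IdealSheafData.inclusion (le_sup_right : J ≤ I ⊔ J))
    ((IdealSheafData.inclusion (le_sup_left : I ≤ I ⊔ J)).appTop a)
  obtain ⟨c, hc, -⟩ := exists_appTop_inclusion_inf_eq a b hb.symm
  exact ⟨c, hc⟩

end Gluing

section Criterion

variable {Y : Scheme.{u}}

/-- The colon ideal sheaf `(I : a)` of an ideal sheaf `I` by a global function `a`. -/
noncomputable def colon (I : Y.IdealSheafData) (a : Γ(Y, ⊤)) : Y.IdealSheafData where
  ideal U := (I.ideal U).colon {res le_top a}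
  map_ideal_basicOpen U f := by
    have := U.2.isLocalization_basicOpen f
    apply le_antisymm
    · refine Ideal.map_le_iff_le_comap.mpr fun x hx ↦ Submodule.mem_colon_singleton.mpr ?_
      have := res_mem_ideal I (Y.affineBasicOpen_le f) (Submodule.mem_colon_singleton.mp hx)
      rwa [smul_eq_mul, map_mul, res_res] at this
    · intro x hx
      have hxa : x * res le_top a ∈ I.ideal (Y.affineBasicOpen f) :=
        Submodule.mem_colon_singleton.mp hx
      obtain ⟨n, y, hy⟩ := exists_res_eq_pow_mul U.2 f x
      obtain ⟨k, hk⟩ := (res_mem_ideal_basicOpen_iff I U f (y * res le_top a)).mp (by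
        rw [map_mul, hy, res_res, mul_assoc]
        exact Ideal.mul_mem_left _ _ hxa)
      have hky : f ^ k * y ∈ (I.ideal U).colon {res le_top a} :=
        Submodule.mem_colon_singleton.mpr (by rwa [smul_eq_mul, mul_assoc])
      have hf : IsUnit (res (Y.basicOpen_le f) f) := IsLocalization.Away.algebraMap_isUnit f
      refine (Ideal.unit_mul_mem_iff_mem _ (hf.pow (k + n))).mp ?_
      have e : res (Y.basicOpen_le f) (f ^ k * y) = res (Y.basicOpen_le f) f ^ (k + n) * x := by
        rw [map_mul, map_pow, hy, pow_add, mul_assoc]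
      exact e ▸ Ideal.mem_map_of_mem _ hky

lemma mem_colon_ideal_iff {I : Y.IdealSheafData} {a : Γ(Y, ⊤)} {U : Y.affineOpens}
    {x : Γ(Y, U)} : x ∈ (colon I a).ideal U ↔ x * res le_top a ∈ I.ideal U :=
  Submodule.mem_colon_singleton

lemma exists_mem_basicOpen_le_of_isClosed_singleton
    (h : ∀ I : Y.IdealSheafData, Function.Surjective I.subschemeι.appTop) {y : Y}
    (hy : IsClosed {y}) {U : Y.Opens} (hyU : y ∈ U) :
    ∃ a : Γ(Y, ⊤), y ∈ Y.basicOpen a ∧ Y.basicOpen a ≤ U := by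
  let I := IdealSheafData.vanishingIdeal U.compl
  let J := IdealSheafData.vanishingIdeal (⟨{y}, hy⟩ : Closeds Y)
  have hIJ : I ⊔ J = ⊤ := by
    rw [← IdealSheafData.support_eq_bot_iff, IdealSheafData.support_sup]
    refine SetLike.coe_injective ?_
    simp [I, J, hyU]
  have : IsEmpty (I ⊔ J).subscheme := by
    refine ⟨fun z ↦ ?_⟩
    have hz : (I ⊔ J).subschemeι z ∈ (I ⊔ J).support :=
      (IdealSheafData.range_subschemeι _).subset ⟨z, rfl⟩
    rw [(IdealSheafData.support_eq_bot_iff _).mpr hIJ] at hz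
    exact hz
  obtain ⟨c, hcI, hcJ⟩ := exists_appTop_inclusion_inf_eq (0 : Γ(I.subscheme, ⊤))
    (1 : Γ(J.subscheme, ⊤)) (Subsingleton.elim _ _)
  obtain ⟨a, rfl⟩ := h (I ⊓ J) c
  have haI : IsLift I.subschemeι 0 a :=
    hcI ▸ (isLift_appTop (I ⊓ J).subschemeι a).comp
      (IdealSheafData.inclusion_subschemeι inf_le_left)
  have haJ : IsLift J.subschemeι 1 a :=
    hcJ ▸ (isLift_appTop (I ⊓ J).subschemeι a).comp
      (IdealSheafData.inclusion_subschemeι inf_le_right)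
  refine ⟨a, ?_, fun y' hy' ↦ ?_⟩
  · obtain ⟨z, hz⟩ := exists_subschemeι_eq (I := J) (y := y) (by
      rw [← SetLike.mem_coe, IdealSheafData.coe_support_vanishingIdeal]; rfl)
    rw [← hz, haJ.mem_basicOpen_iff (Opens.mem_top _)]
    simp
  · by_contra hyU'
    obtain ⟨z, rfl⟩ := exists_subschemeι_eq (I := I) (y := y') (by
      rw [← SetLike.mem_coe, IdealSheafData.coe_support_vanishingIdeal]; exact hyU')
    simpa using (haI.mem_basicOpen_iff (Opens.mem_top _)).mp hy'

lemma exists_mem_isAffineOpen_basicOpen [CompactSpace Y]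
    (h : ∀ I : Y.IdealSheafData, Function.Surjective I.subschemeι.appTop) (y : Y) :
    ∃ a : Γ(Y, ⊤), IsAffineOpen (Y.basicOpen a) ∧ y ∈ Y.basicOpen a := by
  obtain ⟨x, hxy, hx⟩ :=
    (isClosed_closure (s := {y})).exists_closed_singleton ⟨y, subset_closure rfl⟩
  obtain ⟨U, hxU, -⟩ := exists_isAffineOpen_mem_le (Opens.mem_top x)
  obtain ⟨a, hxa, haU⟩ := exists_mem_basicOpen_le_of_isClosed_singleton h hx hxU
  exact ⟨a, isAffineOpen_basicOpen_of_le U.2 a haU,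
    (specializes_iff_mem_closure.mpr hxy).mem_open (Y.basicOpen a).2 hxa⟩

lemma mem_span_of_forall_res_mem
    (h : ∀ I : Y.IdealSheafData, Function.Surjective I.subschemeι.appTop) (s : Finset Γ(Y, ⊤))
    {b : Γ(Y, ⊤)} (hb : ∀ U : Y.affineOpens,
      res le_top b ∈ (IdealSheafData.ofIdealTop (Ideal.span (s : Set Γ(Y, ⊤)))).ideal U) :
    b ∈ Ideal.span (s : Set Γ(Y, ⊤)) := by
  classical
  induction s using Finset.induction_on generalizing b with
  | empty =>
    have hb0 : b = 0 := eq_of_forall_res_eq (fun U : Y.affineOpens ↦ U.1) (fun _ ↦ le_top)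
      (iSup_affineOpens_eq_top Y).ge fun U ↦ by simpa using hb U
    rw [hb0]
    exact zero_mem _
  | insert a s _ ih =>
    let I := IdealSheafData.ofIdealTop (Ideal.span (s : Set Γ(Y, ⊤)))
    have exists_coeff (U : Y.affineOpens) :
        ∃ w : Γ(Y, U), res le_top b - w * res le_top a ∈ I.ideal U := by
      have := hb U
      rw [IdealSheafData.ofIdealTop_ideal, Ideal.map_span, Finset.coe_insert, Set.image_insert_eq,
        Ideal.mem_span_insert, ← Ideal.map_span] at this
      obtain ⟨w, z, hz, e⟩ := this
      refine ⟨w, ?_⟩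
      rwa [e, res, add_sub_cancel_left]
    choose w hw using exists_coeff
    obtain ⟨σ, hσ⟩ := exists_isLift_of_sub_mem_ideal (colon I a) w fun U V W hU hV ↦ by
      rw [mem_colon_ideal_iff]
      convert sub_mem (res_mem_ideal I hV (hw V)) (res_mem_ideal I hU (hw U)) using 1
      simp only [map_sub, map_mul, res_res]
      ring
    obtain ⟨v, rfl⟩ := h (colon I a) σ
    have hv : b - v * a ∈ Ideal.span (s : Set Γ(Y, ⊤)) := ih fun U ↦ by
      have hvw := mem_colon_ideal_iff.mp
        ((hσ U).sub_mem_ideal ((isLift_appTop _ v).restrict le_top))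
      convert add_mem (hw U) hvw using 1
      rw [map_sub, map_mul]
      ring
    rw [Finset.coe_insert, Ideal.mem_span_insert]
    exact ⟨v, _, hv, by ring⟩

lemma isAffine_of_forall_appTop_surjective [CompactSpace Y]
    (h : ∀ I : Y.IdealSheafData, Function.Surjective I.subschemeι.appTop) : IsAffine Y := by
  choose a ha hya using exists_mem_isAffineOpen_basicOpen h
  obtain ⟨t, ht⟩ := CompleteLattice.IsCompactElement.exists_finset_of_le_iSup (Y.Opens)
    ((Opens.isCompactElement_iff ⊤).mpr isCompact_univ) (fun y ↦ Y.basicOpen (a y))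
    fun y _ ↦ Opens.mem_iSup.mpr ⟨y, hya y⟩
  classical
  refine isAffine_of_isAffineOpen_basicOpen (t.image a : Finset Γ(Y, ⊤)) ?_ ?_
  · refine (Ideal.eq_top_iff_one _).mpr (mem_span_of_forall_res_mem h _ fun U ↦ ?_)
    suffices (IdealSheafData.ofIdealTop (Ideal.span (t.image a : Set Γ(Y, ⊤)))).ideal U = ⊤ by
      rw [this]; trivial
    rw [IdealSheafData.ofIdealTop_ideal, Ideal.map_span, ← U.2.self_le_iSup_basicOpen_iff]
    intro y hy
    obtain ⟨x, hx⟩ := Opens.mem_iSup.mp (ht (Opens.mem_top y))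
    obtain ⟨hxt, hyx⟩ := Opens.mem_iSup.mp hx
    have hax := Finset.mem_coe.mpr (Finset.mem_image_of_mem a hxt)
    exact Opens.mem_iSup.mpr ⟨⟨res le_top (a x), Set.mem_image_of_mem _ hax⟩,
      (basicOpen_res le_top (a x)).ge ⟨hy, hyx⟩⟩
  · simpa using fun y _ ↦ ha y

end Criterion

section SquareZero

variable {Y : Scheme.{u}} {J : Y.IdealSheafData}

lemma surjective_subschemeι_of_mul_self_eq_bot (hJ : J * J = ⊥) :
    Function.Surjective J.subschemeι := fun y ↦ by
  have h : J.support = ⊤ := by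
    rw [← IdealSheafData.support_bot, ← hJ, IdealSheafData.support_mul, sup_idem]
  exact exists_subschemeι_eq (h ▸ trivial)

section

variable {V : Y.Opens} {r : Γ(J.subscheme, ⊤)} {t t' c : Γ(Y, V)}

/-- If `J` squares to zero, it is a module over `𝒪_Y / J`. -/
lemma mul_eq_mul_of_isLift (hJ : J * J = ⊥) (ht : IsLift J.subschemeι r t)
    (ht' : IsLift J.subschemeι r t') (hc : IsLift J.subschemeι 0 c) : t * c = t' * c := by
  refine eq_of_forall_res_eq (fun W : {W : Y.affineOpens // W.1 ≤ V} ↦ W.1.1) (fun W ↦ W.2)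
    (le_iSup_affineOpens_le V) fun W ↦ ?_
  have h : (res W.2 t - res W.2 t') * res W.2 c ∈ (J * J).ideal W :=
    Ideal.mul_mem_mul ((ht.restrict W.2).sub_mem_ideal (ht'.restrict W.2))
      (isLift_zero_iff.mp (hc.restrict W.2))
  rw [hJ, IdealSheafData.ideal_bot, Pi.bot_apply, Ideal.mem_bot] at h
  rw [map_mul, map_mul]
  linear_combination h

end

variable {κ : Type*} {U : κ → Y.affineOpens}

/-- Local lifts `x i` of a section of `V(J)` differ by a cocycle `x i - x j` with values in `J`.
If `J` squares to zero, the functions on `V(J)` which make this cocycle a coboundary form an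
ideal. -/
noncomputable def splittingIdeal (hJ : J * J = ⊥) (x : ∀ i, Γ(Y, U i)) :
    Ideal Γ(J.subscheme, ⊤) where
  carrier := {r | ∃ t h : ∀ i, Γ(Y, U i), (∀ i, IsLift J.subschemeι r (t i)) ∧
    (∀ i, IsLift J.subschemeι 0 (h i)) ∧ ∀ i j,
      res (inf_le_left : (U i).1 ⊓ (U j).1 ≤ U i) (h i) -
        res (inf_le_right : (U i).1 ⊓ (U j).1 ≤ U j) (h j) =
      res inf_le_left (t i) * (res inf_le_left (x i) - res inf_le_right (x j))}
  zero_mem' := ⟨0, 0, fun _ ↦ isLift_zero_iff.mpr (zero_mem _),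
    fun _ ↦ isLift_zero_iff.mpr (zero_mem _), by simp⟩
  add_mem' := by
    rintro r r' ⟨t, h, ht, hh, e⟩ ⟨t', h', ht', hh', e'⟩
    refine ⟨t + t', h + h', fun i ↦ (ht i).add (ht' i),
      fun i ↦ by simpa using (hh i).add (hh' i), fun i j ↦ ?_⟩
    simp only [Pi.add_apply, map_add]
    linear_combination e i j + e' i j
  smul_mem' := by
    rintro a r ⟨t, h, ht, hh, e⟩
    choose b hb using fun i ↦ exists_isLift a (U i)
    refine ⟨b * t, b * h, fun i ↦ (hb i).mul (ht i),
      fun i ↦ by simpa using (hb i).mul (hh i), fun i j ↦ ?_⟩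
    have hbh := mul_eq_mul_of_isLift hJ ((hb i).restrict inf_le_left)
      ((hb j).restrict (inf_le_right : (U i).1 ⊓ (U j).1 ≤ U j)) ((hh j).restrict inf_le_right)
    simp only [Pi.mul_apply, map_mul]
    linear_combination res inf_le_left (b i) * e i j + hbh

lemma exists_appTop_eq_of_one_mem_splittingIdeal (hJ : J * J = ⊥)
    (hU : ⨆ i, (U i : Y.Opens) = ⊤) {s : Γ(J.subscheme, ⊤)} {x : ∀ i, Γ(Y, U i)}
    (hx : ∀ i, IsLift J.subschemeι s (x i)) (h : 1 ∈ splittingIdeal hJ x) :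
    ∃ y, J.subschemeι.appTop y = s := by
  obtain ⟨t, h, ht, hh, e⟩ := h
  obtain ⟨y, hy⟩ := exists_glue (fun i ↦ (U i).1) hU (fun i ↦ x i - h i) fun i j ↦ by
    have hc : IsLift J.subschemeι 0 (res (inf_le_left : (U i).1 ⊓ (U j).1 ≤ U i) (x i) -
        res (inf_le_right : (U i).1 ⊓ (U j).1 ≤ U j) (x j)) :=
      sub_self s ▸ ((hx i).restrict _).sub ((hx j).restrict _)
    have htc := mul_eq_mul_of_isLift hJ ((ht i).restrict inf_le_left) .one hc
    simp only [map_sub]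
    linear_combination -e i j - htc
  refine ⟨y, IsLift.appTop_eq_of_cover hU fun i ↦ ?_⟩
  rw [hy]
  simpa using (hx i).sub (hh i)

lemma basicOpen_le_basicOpen_of_isLift (hJ : J * J = ⊥) {r : Γ(J.subscheme, ⊤)} {U V : Y.Opens}
    {t : Γ(Y, U)} {t' : Γ(Y, V)} (ht : IsLift J.subschemeι r t) (ht' : IsLift J.subschemeι r t')
    (hUV : U ≤ V) : Y.basicOpen t ≤ Y.basicOpen t' := fun y hy ↦ by
  obtain ⟨z, rfl⟩ := surjective_subschemeι_of_mul_self_eq_bot hJ y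
  have hz := Y.basicOpen_le t hy
  exact (ht'.mem_basicOpen_iff (hUV hz)).mpr ((ht.mem_basicOpen_iff hz).mp hy)

/-- Over the locus where `r` is invertible the cocycle of `x` is the coboundary of
`i ↦ x i - x k`, and `g i` extends `r ^ n` times this cochain. -/
lemma eventually_pow_mul_sub_eq_zero [QuasiSeparatedSpace Y] (hJ : J * J = ⊥)
    {s r : Γ(J.subscheme, ⊤)} {x t g : ∀ i, Γ(Y, U i)} (hx : ∀ i, IsLift J.subschemeι s (x i))
    (ht : ∀ i, IsLift J.subschemeι r (t i)) {k : κ} (hk : ∀ i, Y.basicOpen (t i) ≤ U k) {n : ℕ}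
    (hg : ∀ i, res (Y.basicOpen_le (t i)) (g i) = res (Y.basicOpen_le (t i)) (t i) ^ n *
      (res (Y.basicOpen_le (t i)) (x i) - res (hk i) (x k))) (i j : κ) :
    ∀ᶠ m : ℕ in Filter.atTop, res (inf_le_left : (U i).1 ⊓ (U j).1 ≤ U i) (t i) ^ m *
      (res inf_le_left (g i) - res inf_le_right (g j) -
        res inf_le_left (t i) ^ n * (res inf_le_left (x i) - res inf_le_right (x j))) = 0 := by
  refine eventually_pow_mul_eq_zero
    (QuasiSeparatedSpace.inter_isCompact _ _ (U i).1.2 (U i).2.isCompact (U j).1.2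
      (U j).2.isCompact) ?_
  have htij := (ht i).restrict (inf_le_left : (U i).1 ⊓ (U j).1 ≤ U i)
  have hi := basicOpen_le_basicOpen_of_isLift hJ htij (ht i) inf_le_left
  have hj := basicOpen_le_basicOpen_of_isLift hJ htij (ht j) inf_le_right
  have hgi := congr(res hi $(hg i))
  have hgj := congr(res hj $(hg j))
  have hc := ((hx j).restrict (hj.trans (Y.basicOpen_le _))).sub
    ((hx k).restrict (hj.trans (hk j)))
  rw [sub_self] at hc
  have htc := mul_eq_mul_of_isLift hJ (((ht i).restrict (hi.trans (Y.basicOpen_le _))).pow n)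
    (((ht j).restrict (hj.trans (Y.basicOpen_le _))).pow n) hc
  simp only [map_sub, map_mul, map_pow, res_res] at hgi hgj ⊢
  linear_combination hgi - hgj + htc

lemma mem_radical_splittingIdeal [QuasiSeparatedSpace Y] [Finite κ] (hJ : J * J = ⊥)
    {s : Γ(J.subscheme, ⊤)} {x : ∀ i, Γ(Y, U i)} (hx : ∀ i, IsLift J.subschemeι s (x i))
    {r : Γ(J.subscheme, ⊤)} {k : κ} (hr : J.subscheme.basicOpen r ≤ J.subschemeι ⁻¹ᵁ U k) :
    r ∈ (splittingIdeal hJ x).radical := by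
  choose t ht using fun i ↦ exists_isLift r (U i)
  have htk (i : κ) : Y.basicOpen (t i) ≤ U k := fun y hy ↦ by
    obtain ⟨z, rfl⟩ := surjective_subschemeι_of_mul_self_eq_bot hJ y
    exact hr (((ht i).mem_basicOpen_iff (Y.basicOpen_le _ hy)).mp hy)
  have eventually_exists : ∀ᶠ n : ℕ in Filter.atTop, ∀ i, ∃ g ∈ J.ideal (U i),
      res (Y.basicOpen_le (t i)) g = res (Y.basicOpen_le (t i)) (t i) ^ n *
        (res (Y.basicOpen_le (t i)) (x i) - res (htk i) (x k)) :=
    Filter.eventually_all.mpr fun i ↦ eventually_exists_mem_ideal_res_eq J (U i) (t i)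
      (((hx i).restrict _).sub_mem_ideal (U := Y.affineBasicOpen (t i)) ((hx k).restrict _))
  obtain ⟨n, hn⟩ := eventually_exists.exists
  choose g hg eg using hn
  obtain ⟨m, hm⟩ := (Filter.eventually_all.mpr fun i ↦ Filter.eventually_all.mpr fun j ↦
    eventually_pow_mul_sub_eq_zero hJ hx ht htk eg i j).exists
  refine ⟨m + n, fun i ↦ t i ^ (m + n), fun i ↦ t i ^ m * g i, fun i ↦ (ht i).pow _,
    fun i ↦ isLift_zero_iff.mpr (Ideal.mul_mem_left _ _ (hg i)), fun i j ↦ ?_⟩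
  have htg := mul_eq_mul_of_isLift hJ (((ht i).restrict inf_le_left).pow m)
    (((ht j).restrict (inf_le_right : (U i).1 ⊓ (U j).1 ≤ U j)).pow m)
    ((isLift_zero_iff.mpr (hg j)).restrict inf_le_right)
  simp only [map_mul, map_pow]
  linear_combination hm i j + htg

lemma splittingIdeal_eq_top [QuasiSeparatedSpace Y] [Finite κ] [IsAffine J.subscheme]
    (hJ : J * J = ⊥) (hU : ⨆ i, (U i : Y.Opens) = ⊤)
    {s : Γ(J.subscheme, ⊤)} {x : ∀ i, Γ(Y, U i)} (hx : ∀ i, IsLift J.subschemeι s (x i)) :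
    splittingIdeal hJ x = ⊤ := by
  rw [← Ideal.radical_eq_top, eq_top_iff]
  have hle : Ideal.span {r | ∃ k, J.subscheme.basicOpen r ≤ J.subschemeι ⁻¹ᵁ U k} ≤
      (splittingIdeal hJ x).radical :=
    Ideal.span_le.mpr fun r ⟨_, hr⟩ ↦ mem_radical_splittingIdeal hJ hx hr
  refine le_trans (ge_of_eq ?_) hle
  rw [← (isAffineOpen_top _).self_le_iSup_basicOpen_iff]
  intro z _
  obtain ⟨k, hk⟩ := Opens.mem_iSup.mp ((iSup_preimage_eq_top J.subschemeι hU).ge (Opens.mem_top z))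
  obtain ⟨r, hzr, hr⟩ := exists_basicOpen_le hk
  exact Opens.mem_iSup.mpr ⟨⟨r, k, hr⟩, hzr⟩

lemma appTop_surjective_of_mul_self_eq_bot [CompactSpace Y] [QuasiSeparatedSpace Y]
    [IsAffine J.subscheme] (hJ : J * J = ⊥) : Function.Surjective J.subschemeι.appTop := by
  intro s
  obtain ⟨κ, hκ⟩ := exists_finite_affine_cover Y
  choose x hx using fun i : κ ↦ exists_isLift s i.1
  exact exists_appTop_eq_of_one_mem_splittingIdeal hJ hκ hx
    (splittingIdeal_eq_top hJ hκ hx ▸ Submodule.mem_top)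

end SquareZero

section Reduction

variable {Y : Scheme.{u}} {I J : Y.IdealSheafData}

lemma appTop_surjective_of_le [IsAffine I.subscheme] (hIJ : I ≤ J)
    (hI : Function.Surjective I.subschemeι.appTop) : Function.Surjective J.subschemeι.appTop := by
  intro a
  obtain ⟨b, rfl⟩ := appTop_surjective_of_isAffine (IdealSheafData.inclusion hIJ) a
  obtain ⟨y, rfl⟩ := hI b
  exact ⟨y, (appTop_inclusion_appTop_subschemeι hIJ y).symm⟩

lemma appTop_surjective_of_inf [IsAffine J.subscheme]
    (hIJ : Function.Surjective (I ⊓ J).subschemeι.appTop) :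
    Function.Surjective I.subschemeι.appTop := by
  intro a
  obtain ⟨b, rfl⟩ := appTop_inclusion_inf_le_left_surjective (J := J) a
  obtain ⟨y, rfl⟩ := hIJ b
  exact ⟨y, (appTop_inclusion_appTop_subschemeι inf_le_left y).symm⟩

lemma appTop_surjective_bot : Function.Surjective (⊥ : Y.IdealSheafData).subschemeι.appTop :=
  (ConcreteCategory.bijective_of_isIso (Γ.map (IdealSheafData.subschemeι ⊥).op)).2

lemma appTop_surjective_of_mul_eq_bot [IsNoetherian Y]
    (ih : ∀ K : Y.IdealSheafData, K ≠ ⊥ → IsAffine K.subscheme) (hJ : J ≠ ⊥) (hIJ : I * J = ⊥) :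
    Function.Surjective I.subschemeι.appTop := by
  have := ih J hJ
  refine appTop_surjective_of_inf (J := J) ?_
  by_cases h : I ⊓ J = ⊥
  · rw [h]
    exact appTop_surjective_bot
  · have := ih _ h
    refine appTop_surjective_of_mul_self_eq_bot (le_bot_iff.mp (le_of_le_of_eq ?_ hIJ))
    exact fun U ↦ Ideal.mul_mono inf_le_left inf_le_right

lemma appTop_surjective_of_not_noZeroDivisors [IsNoetherian Y]
    (ih : ∀ K : Y.IdealSheafData, K ≠ ⊥ → IsAffine K.subscheme)
    (hY : ¬ NoZeroDivisors Y.IdealSheafData) (K : Y.IdealSheafData) :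
    Function.Surjective K.subschemeι.appTop := by
  simp only [noZeroDivisors_iff, not_forall, not_or] at hY
  obtain ⟨I, J, hIJ, hI, hJ⟩ := hY
  by_cases hKI : K * I = ⊥
  · exact appTop_surjective_of_mul_eq_bot ih hI hKI
  · have := ih _ hKI
    have hKIJ : K * I * J = ⊥ := by rw [mul_assoc, hIJ]; exact mul_zero K
    exact appTop_surjective_of_le (fun U ↦ Ideal.mul_le_left)
      (appTop_surjective_of_mul_eq_bot ih hJ hKIJ)

end Reduction

section Integral

variable (Y : Scheme.{u})

lemma exists_nilradical_pow_eq_bot [IsNoetherian Y] : ∃ n : ℕ, Y.nilradical ^ n = ⊥ := by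
  obtain ⟨κ, hκ⟩ := exists_finite_affine_cover Y
  have isNilpotent (U : Y.affineOpens) : IsNilpotent (Y.nilradical.ideal U) :=
    have := IsLocallyNoetherian.component_noetherian U
    IsNoetherianRing.isNilpotent_nilradical Γ(Y, U)
  have eventually_pow_eq_bot : ∀ᶠ n : ℕ in Filter.atTop, ∀ i : κ, Y.nilradical.ideal i.1 ^ n = ⊥ :=
    Filter.eventually_all.mpr fun i ↦ by
      obtain ⟨m, hm⟩ := isNilpotent i.1
      filter_upwards [Filter.eventually_ge_atTop m] with n hn
      exact pow_eq_zero_of_le hn hm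
  obtain ⟨n, hn⟩ := eventually_pow_eq_bot.exists
  exact ⟨n, IdealSheafData.ext_of_iSup_eq_top (fun i : κ ↦ i.1) hκ hn⟩

lemma isReduced_of_noZeroDivisors_idealSheafData [IsNoetherian Y]
    [NoZeroDivisors Y.IdealSheafData] : IsReduced Y := by
  obtain ⟨n, hn⟩ := exists_nilradical_pow_eq_bot Y
  have hY : Y.nilradical = ⊥ := eq_zero_of_pow_eq_zero hn
  refine ⟨fun U ↦ ⟨fun x hx ↦ ?_⟩⟩
  refine eq_of_forall_res_eq (fun V : {V : Y.affineOpens // V.1 ≤ U} ↦ V.1.1) (fun V ↦ V.2)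
    (le_iSup_affineOpens_le U) fun V ↦ ?_
  have hxV : res V.2 x ∈ Y.nilradical.ideal V := hx.map (res V.2)
  rwa [hY, IdealSheafData.ideal_bot, Pi.bot_apply, Ideal.mem_bot, ← map_zero (res V.2)] at hxV

lemma preirreducibleSpace_of_noZeroDivisors_idealSheafData [IsReduced Y]
    [NoZeroDivisors Y.IdealSheafData] : PreirreducibleSpace Y := by
  rw [preirreducibleSpace_iff, isPreirreducible_iff_isClosed_union_isClosed]
  intro Z₁ Z₂ h₁ h₂ h
  have hmul : IdealSheafData.vanishingIdeal ⟨Z₁, h₁⟩ * IdealSheafData.vanishingIdeal ⟨Z₂, h₂⟩ =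
      (0 : Y.IdealSheafData) := by
    refine IdealSheafData.support_eq_top_iff.mp (SetLike.coe_injective ?_)
    simpa using h
  refine (eq_zero_or_eq_zero_of_mul_eq_zero hmul).imp (fun h₀ ↦ ?_) fun h₀ ↦ ?_ <;> by_contra hZ
  · exact vanishingIdeal_ne_bot (Z := ⟨Z₁, h₁⟩) (fun h' ↦ hZ congr(($h' : Set Y)).ge) h₀
  · exact vanishingIdeal_ne_bot (Z := ⟨Z₂, h₂⟩) (fun h' ↦ hZ congr(($h' : Set Y)).ge) h₀

lemma isIntegral_of_noZeroDivisors_idealSheafData [IsNoetherian Y] [Nonempty Y]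
    [NoZeroDivisors Y.IdealSheafData] : IsIntegral Y := by
  have := isReduced_of_noZeroDivisors_idealSheafData Y
  have := preirreducibleSpace_of_noZeroDivisors_idealSheafData Y
  have : IrreducibleSpace Y := { toNonempty := inferInstance }
  exact isIntegral_of_irreducibleSpace_of_isReduced Y

end Integral

section Algebra

open TensorProduct in
lemma exists_linearMap_one_eq_one (R K M : Type*) [CommRing R] [Field K] [Algebra R K]
    [Module.Flat R K] [CommRing M] [Algebra R M] (h : Function.Injective (algebraMap R M)) :
    ∃ l : M →ₗ[R] K, l 1 = 1 := by
  have : Nontrivial (K ⊗[R] M) :=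
    Algebra.TensorProduct.nontrivial_of_algebraMap_injective_of_flat_left R K M h
  obtain ⟨g, hg⟩ := LinearMap.exists_leftInverse_of_injective
    (LinearMap.toSpanSingleton K (K ⊗[R] M) 1)
    (LinearMap.ker_eq_bot.mpr (smul_left_injective K one_ne_zero))
  refine ⟨(g.restrictScalars R).comp (TensorProduct.mk R K M 1), ?_⟩
  have : g 1 = 1 := by simpa using congr($hg 1)
  simpa [Algebra.TensorProduct.one_def] using this

lemma exists_ne_zero_forall_smul_mem_range {A K N : Type*} [CommRing A] [Nontrivial A]
    [CommRing K] [Algebra A K] [IsFractionRing A K] [AddCommGroup N] [Module A N]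
    [Module.Finite A N] (ψ : N →ₗ[A] K) :
    ∃ t : A, t ≠ 0 ∧ ∀ v, ∃ a, algebraMap A K a = algebraMap A K t * ψ v := by
  obtain ⟨t, ht, h⟩ := FractionalIdeal.isFractional_of_fg (S := nonZeroDivisors A)
    (I := LinearMap.range ψ) (Module.Finite.iff_fg.mp inferInstance)
  refine ⟨t, nonZeroDivisors.ne_zero ht, fun v ↦ ?_⟩
  obtain ⟨a, ha⟩ := h _ (LinearMap.mem_range_self ψ v)
  exact ⟨a, by rw [ha, Algebra.smul_def]⟩

lemma mem_radical_iInf {R κ : Type*} [CommSemiring R] [Finite κ] (I : κ → Ideal R) {x : R}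
    (h : ∀ i, x ∈ (I i).radical) : x ∈ (⨅ i, I i).radical := by
  choose n hn using h
  obtain ⟨N, hN⟩ := Finite.exists_le n
  exact ⟨N, (Submodule.mem_iInf _).mpr fun i ↦ Ideal.pow_mem_of_pow_mem _ (hn i) (hN i)⟩

end Algebra

lemma genericPoint_mem_iff {Y : Scheme.{u}} [IrreducibleSpace Y] (U : Y.Opens) :
    genericPoint Y ∈ U ↔ (U : Set Y).Nonempty := by
  simpa using (genericPoint_spec Y).mem_open_set_iff U.isOpen

lemma mem_radical_span_singleton_of_basicOpen_le {Y : Scheme.{u}} {U : Y.Opens}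
    (hU : IsAffineOpen U) {x y : Γ(Y, U)} (h : Y.basicOpen x ≤ Y.basicOpen y) :
    x ∈ (Ideal.span {y}).radical := by
  rw [← PrimeSpectrum.basicOpen_le_basicOpen_iff, ← hU.fromSpec_preimage_basicOpen,
    ← hU.fromSpec_preimage_basicOpen]
  exact hU.fromSpec.preimage_mono h

lemma app_injective_of_surjective {X Y : Scheme.{u}} [IsReduced Y] (f : X ⟶ Y) [Surjective f]
    (U : Y.Opens) : Function.Injective (f.app U) := by
  refine (injective_iff_map_eq_zero (f.app U).hom).mpr fun r (hr : f.app U r = 0) ↦ ?_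
  rw [← basicOpen_eq_bot_iff, eq_bot_iff]
  intro y hy
  obtain ⟨x, rfl⟩ := f.surjective y
  rwa [← mem_basicOpen_app, hr, Scheme.basicOpen_zero] at hy

section FunctionField

variable {Y : Scheme.{u}} [AlgebraicGeometry.IsIntegral Y]

/-- The embedding of the sections over a nonempty open into the function field. -/
noncomputable def toFunctionField {U : Y.Opens} (hU : genericPoint Y ∈ U) :
    Γ(Y, U) →+* Y.functionField :=
  (Y.presheaf.germ U _ hU).hom

lemma toFunctionField_injective {U : Y.Opens} (hU : genericPoint Y ∈ U) :
    Function.Injective (toFunctionField hU) :=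
  germ_injective_of_isIntegral Y _ hU

lemma toFunctionField_res {U V : Y.Opens} (h : U ≤ V) (hU : genericPoint Y ∈ U) (x : Γ(Y, V)) :
    toFunctionField hU (res h x) = toFunctionField (h hU) x :=
  Y.presheaf.germ_res_apply (homOfLE h) _ hU x

lemma isFractionRing_toFunctionField {U : Y.Opens} (hU : IsAffineOpen U)
    (hη : genericPoint Y ∈ U) :
    @IsFractionRing Γ(Y, U) _ Y.functionField _ (toFunctionField hη).toAlgebra :=
  have : Nonempty U := ⟨⟨_, hη⟩⟩
  functionField_isFractionRing_of_isAffineOpen Y U hU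

lemma genericPoint_mem_basicOpen {U : Y.Opens} {x : Γ(Y, U)} (hx : x ≠ 0) :
    genericPoint Y ∈ Y.basicOpen x := by
  rw [genericPoint_mem_iff, ← TopologicalSpace.Opens.ne_bot_iff_nonempty]
  exact mt (basicOpen_eq_bot_iff x).mp hx

lemma exists_glue_of_toFunctionField_eq {κ : Type*} (U : κ → Y.Opens) (hU : ⨆ i, U i = ⊤)
    (hη : ∀ i, genericPoint Y ∈ U i) (a : ∀ i, Γ(Y, U i)) (x : Y.functionField)
    (h : ∀ i, toFunctionField (hη i) (a i) = x) : ∃ b : Γ(Y, ⊤), ∀ i, res le_top b = a i := by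
  refine exists_glue U hU a fun i j ↦ ?_
  have hij : genericPoint Y ∈ U i ⊓ U j := ⟨hη i, hη j⟩
  apply toFunctionField_injective hij
  rw [toFunctionField_res, toFunctionField_res, h, h]

lemma ideal_ne_bot {I : Y.IdealSheafData} (hI : I ≠ ⊥) {U : Y.affineOpens}
    (hU : genericPoint Y ∈ U.1) : I.ideal U ≠ ⊥ := by
  intro h
  refine hI (IdealSheafData.support_eq_top_iff.mp (top_le_iff.mp ?_))
  have hη : genericPoint Y ∈ I.support := by
    simp [IdealSheafData.mem_support_iff_of_mem hU, h]
  have := I.support.isClosed.closure_subset_iff.mpr (Set.singleton_subset_iff.mpr hη)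
  rwa [(genericPoint_spec Y).def] at this

lemma exists_finite_affine_cover_genericPoint_mem (Y : Scheme.{u})
    [AlgebraicGeometry.IsIntegral Y] [CompactSpace Y] : ∃ s : Finset Y.affineOpens,
      ⨆ i : s, (i.1 : Y.Opens) = ⊤ ∧ ∀ i : s, genericPoint Y ∈ i.1.1 := by
  classical
  obtain ⟨s, hs⟩ := exists_finite_affine_cover Y
  refine ⟨s.filter fun i ↦ genericPoint Y ∈ i.1, ?_, fun i ↦ (Finset.mem_filter.mp i.2).2⟩
  refine top_le_iff.mp fun y _ ↦ ?_
  obtain ⟨i, hi⟩ := Opens.mem_iSup.mp (hs.ge (Opens.mem_top y))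
  exact Opens.mem_iSup.mpr
    ⟨⟨i.1, Finset.mem_filter.mpr ⟨i.2, (genericPoint_mem_iff _).mpr ⟨y, hi⟩⟩⟩, hi⟩

end FunctionField

lemma IsLift.app_sub_res_mem_ideal {X Y : Scheme.{u}} {f : X ⟶ Y} [IsAffineHom f]
    {H : X.IdealSheafData} {s : Γ((H.map f).subscheme, ⊤)} {b : Γ(X, ⊤)}
    (hb : H.subschemeι.appTop b = (IdealSheafData.subschemeMap H _ f le_rfl).appTop s)
    {U : Y.affineOpens} {x : Γ(Y, U.1)} (hx : IsLift (H.map f).subschemeι s x) :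
    f.app U x - res le_top b ∈ H.ideal ⟨f ⁻¹ᵁ U.1, U.2.preimage f⟩ := by
  have hfx := isLift_comp_iff.mp (hx.comp (IdealSheafData.subschemeMap_subschemeι H _ f le_rfl))
  rw [← hb] at hfx
  exact IsLift.sub_mem_ideal (U := ⟨f ⁻¹ᵁ U.1, U.2.preimage f⟩) hfx
    ((isLift_appTop _ b).restrict le_top)

section Functional

variable {X Y : Scheme.{u}} [AlgebraicGeometry.IsIntegral Y]

/-- A unital `𝒪_Y`-linear map from `f_* 𝒪_X` to the constant sheaf of rational functions on `Y`.
As restriction to a nonempty open is injective on the target, it is encoded by its value on the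
single open `W`, and extended to the opens containing `W` by `UnitalFunctional.eval`. -/
structure UnitalFunctional (f : X ⟶ Y) (W : Y.Opens) where
  genericPoint_mem : genericPoint Y ∈ W
  toAddMonoidHom : Γ(X, f ⁻¹ᵁ W) →+ Y.functionField
  map_one : toAddMonoidHom 1 = 1
  map_app_mul (r : Γ(Y, W)) (m : Γ(X, f ⁻¹ᵁ W)) :
    toAddMonoidHom (f.app W r * m) = toFunctionField genericPoint_mem r * toAddMonoidHom m

lemma nonempty_unitalFunctional (f : X ⟶ Y) [Surjective f] {W : Y.Opens} (hW : IsAffineOpen W)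
    (hη : genericPoint Y ∈ W) : Nonempty (UnitalFunctional f W) := by
  let := (toFunctionField hη).toAlgebra
  let := (f.app W).hom.toAlgebra
  have := isFractionRing_toFunctionField hW hη
  have : Module.Flat Γ(Y, W) Y.functionField := IsLocalization.flat _ (nonZeroDivisors Γ(Y, W))
  obtain ⟨l, hl⟩ := exists_linearMap_one_eq_one Γ(Y, W) Y.functionField Γ(X, f ⁻¹ᵁ W)
    (app_injective_of_surjective f W)
  exact ⟨hη, l.toAddMonoidHom, hl, fun r m ↦ l.map_smul r m⟩

namespace UnitalFunctional

variable {f : X ⟶ Y} {W : Y.Opens} (l : UnitalFunctional f W) {U V : Y.Opens}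

/-- The functional on the sections over an open containing `W`. -/
noncomputable def eval (hWU : W ≤ U) : Γ(X, f ⁻¹ᵁ U) →+ Y.functionField :=
  l.toAddMonoidHom.comp (res (f.preimage_mono hWU)).toAddMonoidHom

lemma eval_res (hWU : W ≤ U) (hUV : U ≤ V) (m : Γ(X, f ⁻¹ᵁ V)) :
    l.eval hWU (res (f.preimage_mono hUV) m) = l.eval (hWU.trans hUV) m :=
  congrArg l.toAddMonoidHom (res_res _ _ m)

lemma eval_app_mul (hWU : W ≤ U) (r : Γ(Y, U)) (m : Γ(X, f ⁻¹ᵁ U)) :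
    l.eval hWU (f.app U r * m) = toFunctionField (hWU l.genericPoint_mem) r * l.eval hWU m := by
  change l.toAddMonoidHom (res _ (_ * _)) = _ * l.toAddMonoidHom (res _ _)
  rw [_root_.map_mul, ← app_res f hWU, l.map_app_mul, toFunctionField_res hWU]

lemma eval_app (hWU : W ≤ U) (r : Γ(Y, U)) :
    l.eval hWU (f.app U r) = toFunctionField (hWU l.genericPoint_mem) r := by
  have eval_one : l.eval hWU 1 = 1 :=
    (congrArg l.toAddMonoidHom (_root_.map_one (res _))).trans l.map_one
  simpa only [mul_one, eval_one] using l.eval_app_mul hWU r 1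

lemma exists_denominator [IsFinite f] (hU : IsAffineOpen U) (hWU : W ≤ U) :
    ∃ t : Γ(Y, U), t ≠ 0 ∧ ∀ v, ∃ a, toFunctionField (hWU l.genericPoint_mem) a =
      toFunctionField (hWU l.genericPoint_mem) t * l.eval hWU v := by
  let := (toFunctionField (hWU l.genericPoint_mem)).toAlgebra
  let := (f.app U).hom.toAlgebra
  have := isFractionRing_toFunctionField hU (hWU l.genericPoint_mem)
  have : Nontrivial Γ(Y, U) :=
    (toFunctionField (hWU l.genericPoint_mem)).domain_nontrivial
  have : Module.Finite Γ(Y, U) Γ(X, f ⁻¹ᵁ U) := f.finite_app U hU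
  exact exists_ne_zero_forall_smul_mem_range
    ({ l.eval hWU with map_smul' := l.eval_app_mul hWU } :
      Γ(X, f ⁻¹ᵁ U) →ₗ[Γ(Y, U)] Y.functionField)

/-- The sections `b` over `f ⁻¹ᵁ U` such that the functional `m ↦ l (b * m)` takes values
in `I`. -/
noncomputable def conductor (I : Y.IdealSheafData) {U : Y.affineOpens} (hWU : W ≤ U.1) :
    Ideal Γ(X, f ⁻¹ᵁ U.1) where
  carrier := {b | ∀ m, ∃ a ∈ I.ideal U,
    toFunctionField (hWU l.genericPoint_mem) a = l.eval hWU (b * m)}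
  zero_mem' m := ⟨0, zero_mem _, by rw [zero_mul, map_zero, map_zero]⟩
  add_mem' hb hc m := by
    obtain ⟨a, ha, hab⟩ := hb m
    obtain ⟨d, hd, hdc⟩ := hc m
    exact ⟨a + d, add_mem ha hd, by rw [map_add, hab, hdc, add_mul, map_add]⟩
  smul_mem' c b hb m := by
    obtain ⟨a, ha, hab⟩ := hb (c * m)
    exact ⟨a, ha, by rw [hab, smul_eq_mul, mul_left_comm, mul_assoc]⟩

lemma exists_ne_zero_app_mem_conductor [IsFinite f] {I : Y.IdealSheafData} (hI : I ≠ ⊥)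
    {U : Y.affineOpens} (hWU : W ≤ U.1) :
    ∃ d : Γ(Y, U.1), d ≠ 0 ∧ f.app U.1 d ∈ l.conductor I hWU := by
  have hη := hWU l.genericPoint_mem
  have : IsDomain Γ(Y, U.1) := (toFunctionField_injective hη).isDomain _
  obtain ⟨t, ht, exists_eq_mul⟩ := l.exists_denominator U.2 hWU
  obtain ⟨z, hz, hz₀⟩ := Submodule.exists_mem_ne_zero_of_ne_bot (ideal_ne_bot hI hη)
  refine ⟨t * z, mul_ne_zero ht hz₀, fun m ↦ ?_⟩
  obtain ⟨a, ha⟩ := exists_eq_mul m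
  refine ⟨a * z, Ideal.mul_mem_left _ _ hz, ?_⟩
  rw [l.eval_app_mul, _root_.map_mul, _root_.map_mul, ha, mul_right_comm]

section Global

variable {κ : Type*} {U : κ → Y.affineOpens} (hWU : ∀ i, W ≤ (U i).1) (I : Y.IdealSheafData)

/-- The ideal sheaf of `X` generated by the global sections which restrict to the conductor over
each `f ⁻¹ᵁ U i`. -/
noncomputable def conductorSheaf : X.IdealSheafData :=
  .ofIdealTop (⨅ i, (l.conductor I (hWU i)).comap (res le_top))

lemma ideal_conductorSheaf_le [IsAffine X] [IsAffineHom f] (i : κ) :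
    (l.conductorSheaf hWU I).ideal ⟨f ⁻¹ᵁ (U i).1, (U i).2.preimage f⟩ ≤
      l.conductor I (hWU i) :=
  Ideal.map_le_iff_le_comap.mpr (iInf_le _ i)

variable [IsAffine X]

lemma exists_toFunctionField_eq_eval [IsAffineHom f] (i : κ) {b : Γ(X, f ⁻¹ᵁ (U i).1)}
    (hb : b ∈ (l.conductorSheaf hWU I).ideal ⟨f ⁻¹ᵁ (U i).1, (U i).2.preimage f⟩) :
    ∃ a ∈ I.ideal (U i), toFunctionField (hWU i l.genericPoint_mem) a = l.eval (hWU i) b := by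
  simpa only [mul_one] using l.ideal_conductorSheaf_le hWU I i hb 1

lemma map_conductorSheaf_le [IsAffineHom f] (hU : ⨆ i, (U i).1 = ⊤) :
    (l.conductorSheaf hWU I).map f ≤ I := by
  refine IdealSheafData.le_of_iSup_eq_top U hU fun i r hr ↦ ?_
  rw [IdealSheafData.ideal_map_of_isAffineHom] at hr
  obtain ⟨a, ha, har⟩ := l.exists_toFunctionField_eq_eval hWU I i hr
  rw [l.eval_app] at har
  exact toFunctionField_injective _ har ▸ ha

lemma map_conductorSheaf_ne_bot [Finite κ] [IsFinite f] {I : Y.IdealSheafData} (hI : I ≠ ⊥) :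
    (l.conductorSheaf hWU I).map f ≠ ⊥ := by
  intro h
  choose d hd₀ hd using fun i ↦ l.exists_ne_zero_app_mem_conductor hI (hWU i)
  obtain ⟨p, hp, hpη⟩ : ∃ p ∈ (l.conductorSheaf hWU I).support, f p = genericPoint Y := by
    have hη : genericPoint Y ∈ ((l.conductorSheaf hWU I).map f).support := h ▸ trivial
    rwa [IdealSheafData.support_map, Closeds.mem_closure,
      (f.isClosedMap _ (IdealSheafData.support _).isClosed).closure_eq] at hη
  have hpD : p ∈ f ⁻¹ᵁ ⨅ i, Y.basicOpen (d i) := by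
    rw [Scheme.Hom.mem_preimage, hpη, ← SetLike.mem_coe, Opens.coe_iInf, Set.mem_iInter]
    exact fun i ↦ genericPoint_mem_basicOpen (hd₀ i)
  obtain ⟨c, hpc, hcD⟩ := exists_basicOpen_le hpD
  have hc : c ∈ (⨅ i, (l.conductor I (hWU i)).comap (res le_top)).radical := by
    refine mem_radical_iInf _ fun i ↦ ?_
    rw [← Ideal.comap_radical, Ideal.mem_comap]
    refine Ideal.radical_mono ((Ideal.span_singleton_le_iff_mem _).mpr (hd i))
      (mem_radical_span_singleton_of_basicOpen_le ((U i).2.preimage f) ?_)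
    rw [basicOpen_res, ← Scheme.preimage_basicOpen]
    exact inf_le_right.trans (hcD.trans (f.preimage_mono (iInf_le _ i)))
  rw [← SetLike.mem_coe, conductorSheaf, IdealSheafData.coe_support_ofIdealTop,
    ← zeroLocus_radical, mem_zeroLocus_iff] at hp
  exact hp c hc hpc

/-- Correcting a local lift `x` of `s` by the conductor changes `f.app _ x` into the global section
`b` under the functional, so the corrected lifts agree in the function field. -/
lemma exists_isLift_toFunctionField_eq_eval [IsAffineHom f]
    (hI : (l.conductorSheaf hWU I).map f ≤ I)
    {s : Γ(((l.conductorSheaf hWU I).map f).subscheme, ⊤)} {b : Γ(X, ⊤)}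
    (hb : (l.conductorSheaf hWU I).subschemeι.appTop b =
      (IdealSheafData.subschemeMap _ _ f le_rfl).appTop s) (i : κ) :
    ∃ a : Γ(Y, (U i).1), IsLift I.subschemeι ((IdealSheafData.inclusion hI).appTop s) a ∧
      toFunctionField (hWU i l.genericPoint_mem) a = l.eval le_top b := by
  obtain ⟨x, hx⟩ := exists_isLift s (U i)
  obtain ⟨a, ha, hax⟩ :=
    l.exists_toFunctionField_eq_eval hWU I i (hx.app_sub_res_mem_ideal hb)
  refine ⟨x - a, (hx.comp (IdealSheafData.inclusion_subschemeι hI)).of_sub_mem_ideal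
    (by rwa [sub_sub_cancel]), ?_⟩
  have eval_b : l.eval (hWU i) (res le_top b) = l.eval le_top b := l.eval_res (hWU i) le_top b
  rw [map_sub, hax, map_sub, l.eval_app, eval_b, sub_sub_cancel]

lemma appTop_inclusion_mem_range_appTop_subschemeι [IsAffineHom f]
    (hU : ⨆ i, (U i).1 = ⊤) (hI : (l.conductorSheaf hWU I).map f ≤ I)
    (s : Γ(((l.conductorSheaf hWU I).map f).subscheme, ⊤)) :
    ∃ y, I.subschemeι.appTop y = (IdealSheafData.inclusion hI).appTop s := by
  obtain ⟨b, hb⟩ := appTop_surjective_of_isAffine (l.conductorSheaf hWU I).subschemeι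
    ((IdealSheafData.subschemeMap _ _ f le_rfl).appTop s)
  choose a ha hab using l.exists_isLift_toFunctionField_eq_eval hWU I hI hb
  obtain ⟨y, hy⟩ := exists_glue_of_toFunctionField_eq (fun i ↦ (U i).1) hU _ a _ hab
  exact ⟨y, IsLift.appTop_eq_of_cover hU fun i ↦ (hy i).symm ▸ ha i⟩

end Global

end UnitalFunctional

end Functional

lemma appTop_surjective_of_isIntegral {X Y : Scheme.{u}} [AlgebraicGeometry.IsIntegral Y]
    [CompactSpace Y] [IsAffine X] (f : X ⟶ Y) [IsFinite f] [Surjective f]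
    (ih : ∀ K : Y.IdealSheafData, K ≠ ⊥ → IsAffine K.subscheme) {I : Y.IdealSheafData}
    (hI : I ≠ ⊥) : Function.Surjective I.subschemeι.appTop := by
  obtain ⟨κ, hκ, hη⟩ := exists_finite_affine_cover_genericPoint_mem Y
  obtain ⟨W, hηW, hW⟩ := exists_isAffineOpen_mem_le (U := ⨅ i : κ, i.1.1) (y := genericPoint Y)
    (by rw [← SetLike.mem_coe, Opens.coe_iInf, Set.mem_iInter]; exact hη)
  have hWU (i : κ) : W.1 ≤ i.1.1 := hW.trans (iInf_le _ i)
  obtain ⟨l⟩ := nonempty_unitalFunctional f W.2 hηW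
  have hle := l.map_conductorSheaf_le hWU I hκ
  have := ih _ (l.map_conductorSheaf_ne_bot hWU hI)
  intro s
  obtain ⟨t, rfl⟩ := appTop_surjective_of_isAffine (IdealSheafData.inclusion hle) s
  exact l.appTop_inclusion_mem_range_appTop_subschemeι hWU I hκ hle t

section Induction

variable {Y : Scheme.{u}}

lemma wellFoundedGT_idealSheafData (Y : Scheme.{u}) [IsNoetherian Y] :
    WellFoundedGT Y.IdealSheafData := by
  obtain ⟨κ, hκ⟩ := exists_finite_affine_cover Y
  have (i : κ) : IsNoetherianRing Γ(Y, i.1) := IsLocallyNoetherian.component_noetherian i.1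
  let F (I : Y.IdealSheafData) : ∀ i : κ, (Ideal Γ(Y, i.1))ᵒᵈ :=
    fun i ↦ OrderDual.toDual (I.ideal i.1)
  have hF : StrictAnti F := (show Antitone F from fun _ _ h i ↦ h i.1).strictAnti_of_injective
    fun I J h ↦ IdealSheafData.ext_of_iSup_eq_top (fun i : κ ↦ i.1) hκ (congrFun h)
  exact hF.wellFoundedGT

lemma lt_ker_comp_subschemeι {I : Y.IdealSheafData} {K : I.subscheme.IdealSheafData}
    (hK : K ≠ ⊥) : I < (K.subschemeι ≫ I.subschemeι).ker := by
  have hle : I ≤ (K.subschemeι ≫ I.subschemeι).ker :=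
    I.ker_subschemeι.ge.trans (Scheme.Hom.le_ker_comp _ _)
  refine hle.lt_of_not_ge fun h ↦ hK (le_bot_iff.mp ?_)
  refine IdealSheafData.le_of_iSup_eq_top
    (fun U : Y.affineOpens ↦ ⟨_, U.2.preimage I.subschemeι⟩)
    (iSup_preimage_eq_top _ (iSup_affineOpens_eq_top Y)) fun U x hx ↦ ?_
  obtain ⟨y, rfl⟩ := I.subschemeι_app_surjective U x
  rw [← IdealSheafData.map_ker, K.ker_subschemeι] at h
  have hy : y ∈ (K.map I.subschemeι).ideal U := by
    rwa [IdealSheafData.ideal_map_of_isAffineHom]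
  exact (mem_ideal_iff_app_subschemeι_eq_zero I U y).mp (h U hy)

lemma isNoetherian_subscheme [IsNoetherian Y] (I : Y.IdealSheafData) :
    IsNoetherian I.subscheme where
  toIsLocallyNoetherian := LocallyOfFiniteType.isLocallyNoetherian I.subschemeι
  toCompactSpace := QuasiCompact.compactSpace_of_compactSpace I.subschemeι

lemma isAffine_of_forall_ne_bot_isAffine {X : Scheme.{u}} [IsNoetherian Y] [IsAffine X]
    (f : X ⟶ Y) [IsFinite f] [Surjective f]
    (ih : ∀ K : Y.IdealSheafData, K ≠ ⊥ → IsAffine K.subscheme) : IsAffine Y := by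
  rcases isEmpty_or_nonempty Y with _ | _
  · infer_instance
  refine isAffine_of_forall_appTop_surjective fun K ↦ ?_
  by_cases hY : NoZeroDivisors Y.IdealSheafData
  · by_cases hK : K = ⊥
    · exact hK ▸ appTop_surjective_bot
    · have := isIntegral_of_noZeroDivisors_idealSheafData Y
      exact appTop_surjective_of_isIntegral f ih hK
  · exact appTop_surjective_of_not_noZeroDivisors ih hY K

lemma isAffine_subscheme {X : Scheme.{u}} [IsNoetherian Y] [IsAffine X] (f : X ⟶ Y) [IsFinite f]
    [Surjective f] (I : Y.IdealSheafData) : IsAffine I.subscheme := by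
  have := wellFoundedGT_idealSheafData Y
  induction I using WellFoundedGT.induction with
  | ind I IH =>
    have ih (K : I.subscheme.IdealSheafData) (hK : K ≠ ⊥) : IsAffine K.subscheme :=
      have := IH _ (lt_ker_comp_subschemeι hK)
      .of_isIso (K.subschemeι ≫ I.subschemeι).toImage
    have := isNoetherian_subscheme I
    have : IsAffine (Limits.pullback f I.subschemeι) :=
      isAffine_of_isAffineHom (Limits.pullback.fst f I.subschemeι)
    exact isAffine_of_forall_ne_bot_isAffine (Limits.pullback.snd f I.subschemeι) ih

end Induction

end Chevalley

/-- Chevalley's theorem: if `f : X ⟶ Y` is a finite surjective morphism of schemes with `Y`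
noetherian and `X` affine, then `Y` is affine. -/
theorem isAffine_of_isFinite_surjective {X Y : AlgebraicGeometry.Scheme}
    (f : X ⟶ Y) [IsFinite f] (hf : Function.Surjective f.base)
    [IsNoetherian Y] [IsAffine X] : IsAffine Y := by
  have : Surjective f := ⟨hf⟩
  have := Chevalley.isAffine_subscheme f (⊥ : Y.IdealSheafData)
  exact .of_isIso (CategoryTheory.inv (⊥ : Y.IdealSheafData).subschemeι)
end

section
/- Let k be a field, let n ≥ 0, and let d : Fin (n+1) → ℕ satisfy d i ≥ 1 for all i. Grade the polynomial ring A = MvPolynomial (Fin (n+1)) k by weighted degree with respect to d, the m-th graded piece being the submodule of weighted homogeneous polynomials of weighted degree m (so the variable X_i has degree d i). Let f ∈ A be weighted homogeneous of weighted degree m with m > 0, and let U denote the basic open subscheme D₊(f) of Proj A (the open complement of the vanishing locus V₊(f)). If Y is a noetherian scheme admitting a finite surjective morphism U ⟶ Y, then Y is an affine scheme. -/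
open AlgebraicGeometry MvPolynomial

noncomputable instance (k : Type*) [CommRing k] {σ : Type*} (w : σ → ℕ) :
    GradedAlgebra (weightedHomogeneousSubmodule k w) :=
  MvPolynomial.weightedGradedAlgebra k w

/-!
The complement of a hypersurface in `Proj 𝒜` is affine, so this is a case of Chevalley's theorem:
a noetherian scheme `Y` with a finite surjection `π : X ⟶ Y` from an affine scheme is affine. By
noetherian induction, base changing `π` to closed subschemes, every closed subscheme `V(J)` with
`J ≠ 0` may be assumed affine.

If `Y` is not reduced, it carries a nonzero ideal sheaf `I` with `I² = 0`. The opens of `Y` are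
those of `V(I)`, and functions lift from `V(I)` to `Y` because `I` has no `H¹` on a union of two
basic affine charts; hence being affine passes from `V(I)` to `Y`.

If `Y` is reduced, choose `I ≠ 0` such that `Y ∖ V(I)` lies in the closure of a point `η = π x`
outside `V(I)`. A function on `Y` is then determined by its restriction to `V(I)` and its value at
`η`. Fix a `κ(η)`-linear retraction `tr` of `κ(η) → κ(x)`, and let `J` be the ideal sheaf of those
`d ∈ I` for which `d · tr(𝒪_X) ⊆ I`; clearing denominators of finitely many generators of `𝒪_X`
shows `J ≠ 0`. A function on the affine scheme `V(J)`, pulled back to `X ×_Y V(J)`, extends to a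
function `b` on `X`, and `tr b` is the value at `η` of a function on `Y` which agrees with the
given one on `V(I)`. These functions provide affine basic opens around the closed points of `Y`,
and taking traces of a partition of unity on `X` shows that the affine basic opens come from
functions generating the unit ideal.
-/

section

open CategoryTheory TopologicalSpace Scheme

universe u

section Sections

variable {X Y : Scheme.{u}} (π : X ⟶ Y) {U V W : Y.Opens}

/-- Restriction of sections along an inclusion of opens, as a ring homomorphism. -/
noncomputable def res (h : U ≤ V) : Γ(Y, V) →+* Γ(Y, U) :=
  (Y.presheaf.map (homOfLE h).op).hom

theorem res_res (h : U ≤ V) (h' : V ≤ W) (s : Γ(Y, W)) :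
    res h (res h' s) = res (h.trans h') s := by
  simp only [res, ← CommRingCat.comp_apply, ← Functor.map_comp, ← op_comp, homOfLE_comp]

theorem res_app (h : U ≤ V) (s : Γ(Y, V)) :
    res (π.preimage_mono h) (π.app V s) = π.app U (res h s) := by
  simp [res]

theorem res_appTop (U : Y.Opens) (s : Γ(Y, ⊤)) :
    res (le_top : π ⁻¹ᵁ U ≤ ⊤) (π.appTop s) = π.app U (res le_top s) :=
  res_app π le_top s

theorem basicOpen_res_eq_inf (h : U ≤ V) (s : Γ(Y, V)) :
    Y.basicOpen (res h s) = U ⊓ Y.basicOpen s :=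
  Y.basicOpen_res s _

theorem evaluation_res (h : U ≤ V) (s : Γ(Y, V)) {y : Y} (hy : y ∈ U) :
    Y.evaluation U y hy (res h s) = Y.evaluation V y (h hy) s := by
  simp only [Scheme.evaluation, res, CommRingCat.comp_apply]
  congr 1
  exact Y.presheaf.germ_res_apply _ _ _ _

theorem isUnit_res_of_eq_basicOpen (f : Γ(Y, U)) (hV : V = Y.basicOpen f) (hVU : V ≤ U) :
    IsUnit (res hVU f) := by
  subst hV
  exact RingedSpace.isUnit_res_basicOpen Y.toRingedSpace f

theorem exists_mem_affineOpens {y : Y} (hy : y ∈ W) : ∃ V : Y.affineOpens, y ∈ V.1 ∧ V.1 ≤ W := by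
  obtain ⟨V, hV, hyV, hVW⟩ := Opens.isBasis_iff_nbhd.mp Y.isBasis_affineOpens hy
  exact ⟨⟨V, hV⟩, hyV, hVW⟩

theorem section_ext_of_affineOpens {s t : Γ(Y, W)}
    (h : ∀ (U : Y.affineOpens) (hU : U.1 ≤ W), res hU s = res hU t) : s = t := by
  refine Y.sheaf.eq_of_locally_eq' (fun U : { U : Y.affineOpens // U.1 ≤ W } ↦ U.1.1) W
    (fun U ↦ homOfLE U.2) (fun y hy ↦ ?_) s t fun U ↦ h U.1 U.2
  obtain ⟨V, hyV, hVW⟩ := exists_mem_affineOpens hy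
  exact Opens.mem_iSup.mpr ⟨⟨V, hVW⟩, hyV⟩

theorem exists_glue_of_affineOpens (r : ∀ U : Y.affineOpens, Γ(Y, U.1))
    (h : ∀ (U V : Y.affineOpens) (hUV : U.1 ≤ V.1), res hUV (r V) = r U) :
    ∃ t : Γ(Y, ⊤), ∀ U : Y.affineOpens, res le_top t = r U := by
  refine (Y.sheaf.existsUnique_gluing' (fun U : Y.affineOpens ↦ U.1) ⊤ (fun _ ↦ homOfLE le_top)
    (iSup_affineOpens_eq_top Y).ge r fun U V ↦ ?_).exists
  refine section_ext_of_affineOpens fun W hW ↦ ?_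
  exact ((res_res hW inf_le_left _).trans (h W U _)).trans
    ((res_res hW inf_le_right _).trans (h W V _)).symm

theorem exists_glue_pair (hUW : U ≤ W) (hVW : V ≤ W) (hW : W ≤ U ⊔ V) (s : Γ(Y, U)) (t : Γ(Y, V))
    (h : res (inf_le_left : U ⊓ V ≤ U) s = res inf_le_right t) :
    ∃ c : Γ(Y, W), res hUW c = s ∧ res hVW c = t := by
  have hinf : res (inf_le_left : V ⊓ U ≤ V) t = res inf_le_right s := by
    simpa only [res_res] using congr_arg (res (inf_comm V U).le) h.symm
  let r : ∀ b : Bool, Γ(Y, bif b then U else V) := fun b ↦ match b with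
    | true => s
    | false => t
  obtain ⟨c, hc, -⟩ := Y.sheaf.existsUnique_gluing' (fun b ↦ bif b then U else V) W
    (fun b ↦ homOfLE (by cases b <;> assumption)) (by rwa [iSup_bool_eq]) r (by
      rintro (_ | _) (_ | _)
      exacts [rfl, hinf, h, rfl])
  exact ⟨c, hc true, hc false⟩

theorem exists_res_eq_pow_mul (hU : IsAffineOpen U) (f : Γ(Y, U)) (hV : V = Y.basicOpen f)
    (hVU : V ≤ U) (x : Γ(Y, V)) : ∃ (n : ℕ) (y : Γ(Y, U)), res hVU y = res hVU f ^ n * x := by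
  subst hV
  exact exists_eq_pow_mul_of_isAffineOpen Y U hU f x

theorem isAffineOpen_basicOpen_of_le (hV : IsAffineOpen V) (s : Γ(Y, ⊤))
    (h : Y.basicOpen s ≤ V) : IsAffineOpen (Y.basicOpen s) := by
  have : Y.basicOpen (res (le_top : V ≤ ⊤) s) = Y.basicOpen s := by
    rw [basicOpen_res_eq_inf, inf_eq_right.mpr h]
  exact this ▸ hV.basicOpen _

theorem span_eq_top_of_forall_mem_basicOpen [IsAffine X] {S : Set Γ(X, ⊤)}
    (h : ∀ x : X, ∃ a ∈ S, x ∈ X.basicOpen a) : Ideal.span S = ⊤ := by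
  rw [← (isAffineOpen_top X).self_le_iSup_basicOpen_iff]
  intro x _
  obtain ⟨a, ha, hx⟩ := h x
  exact Opens.mem_iSup.mpr ⟨⟨a, ha⟩, hx⟩

theorem exists_finite_affineOpens_cover (Y : Scheme.{u}) [CompactSpace Y] :
    ∃ s : Finset Y.affineOpens, ⨆ U : s, (U.1 : Y.Opens) = ⊤ := by
  obtain ⟨s, hs⟩ := CompleteLattice.IsCompactElement.exists_finset_of_le_iSup Y.Opens
    (Opens.isCompactElement_iff ⊤ |>.mpr isCompact_univ) (fun U : Y.affineOpens ↦ U.1)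
    (iSup_affineOpens_eq_top Y).ge
  exact ⟨s, top_le_iff.mp (hs.trans_eq iSup_subtype')⟩

theorem res_mem_ideal (I : Y.IdealSheafData) {U V : Y.affineOpens} (h : U.1 ≤ V.1)
    {r : Γ(Y, V.1)} (hr : r ∈ I.ideal V) : res h r ∈ I.ideal U := by
  rw [← I.map_ideal (show U ≤ V from h)]
  exact Ideal.mem_map_of_mem _ hr

theorem exists_mem_ideal_res_eq_pow_mul (I : Y.IdealSheafData) {U V : Y.affineOpens}
    (f : Γ(Y, U.1)) (hV : V.1 = Y.basicOpen f) (hVU : V.1 ≤ U.1) {r : Γ(Y, V.1)}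
    (hr : r ∈ I.ideal V) :
    ∃ (n : ℕ), ∃ r' ∈ I.ideal U, res hVU r' = res hVU f ^ n * r := by
  rw [← I.map_ideal (show V ≤ U from hVU)] at hr
  refine Submodule.span_induction ?_ ?_ ?_ ?_ hr
  · rintro _ ⟨x, hx, rfl⟩
    exact ⟨0, x, hx, by rw [pow_zero, one_mul]; rfl⟩
  · exact ⟨0, 0, zero_mem _, by simp⟩
  · rintro x y - - ⟨n, x', hx', hx⟩ ⟨m, y', hy', hy⟩
    refine ⟨n + m, f ^ m * x' + f ^ n * y', add_mem (Ideal.mul_mem_left _ _ hx')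
      (Ideal.mul_mem_left _ _ hy'), ?_⟩
    rw [map_add, map_mul, map_mul, hx, hy, map_pow, map_pow]
    ring
  · rintro c x - ⟨n, x', hx', hx⟩
    obtain ⟨m, c', hc⟩ := exists_res_eq_pow_mul U.2 f hV hVU c
    refine ⟨n + m, c' * x', Ideal.mul_mem_left _ _ hx', ?_⟩
    rw [map_mul, hx, hc, smul_eq_mul]
    ring

end Sections

section SquareZero

variable {Y : Scheme.{u}} {I : Y.IdealSheafData}

theorem subschemeι_app_eq_zero_iff (U : Y.affineOpens) (s : Γ(Y, U.1)) :
    I.subschemeι.app U.1 s = 0 ↔ s ∈ I.ideal U := by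
  rw [← I.ker_subschemeι_app U, RingHom.mem_ker]

theorem mul_eq_zero_of_subschemeι_app_eq_zero (hI : I * I = ⊥) {W : Y.Opens} {s t : Γ(Y, W)}
    (hs : I.subschemeι.app W s = 0) (ht : I.subschemeι.app W t = 0) : s * t = 0 := by
  refine section_ext_of_affineOpens fun U hU ↦ ?_
  have mem {z : Γ(Y, W)} (hz : I.subschemeι.app W z = 0) : res hU z ∈ I.ideal U := by
    rw [← subschemeι_app_eq_zero_iff, ← res_app, hz, map_zero]
  have : res hU s * res hU t ∈ (I * I).ideal U := by
    rw [IdealSheafData.ideal_mul]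
    exact Ideal.mul_mem_mul (mem hs) (mem ht)
  rw [map_mul, map_zero]
  simpa [hI] using this

theorem surjective_subschemeι_of_mul_self_eq_bot (hI : I * I = ⊥) : Surjective I.subschemeι := by
  have hsupp : I.support = ⊤ := by
    simpa [IdealSheafData.support_mul] using congr_arg IdealSheafData.support hI
  exact ⟨Set.range_eq_univ.mp (by rw [I.range_subschemeι, hsupp]; rfl)⟩

theorem isUnit_of_subschemeι_app_eq_one (hI : I * I = ⊥) {W : Y.Opens} {s : Γ(Y, W)}
    (h : I.subschemeι.app W s = 1) : IsUnit s := by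
  have h0 : I.subschemeι.app W (1 - s) = 0 := by rw [map_sub, h, map_one, sub_self]
  refine .of_mul_eq_one (2 - s) ?_
  linear_combination -mul_eq_zero_of_subschemeι_app_eq_zero hI h0 h0

theorem eq_of_preimage_eq {X Y : Scheme.{u}} (π : X ⟶ Y) [Surjective π] {U V : Y.Opens}
    (h : π ⁻¹ᵁ U = π ⁻¹ᵁ V) : U = V :=
  SetLike.coe_injective (Set.preimage_injective.mpr π.surjective (congr_arg SetLike.coe h))

section Charts

variable {V W : Y.Opens} {U U₁ U₂ : Y.affineOpens}
  {f₁ f₂ : Γ(I.subscheme, I.subschemeι ⁻¹ᵁ W)}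

theorem exists_extension_of_subschemeι_app_eq_zero [Surjective I.subschemeι] (hVU : V ≤ U.1)
    (hUW : U.1 ≤ W) (f : Γ(I.subscheme, I.subschemeι ⁻¹ᵁ W))
    (hV : I.subschemeι ⁻¹ᵁ V = I.subschemeι ⁻¹ᵁ U.1 ⊓ I.subscheme.basicOpen f)
    {j : Γ(Y, V)} (hj : I.subschemeι.app V j = 0) :
    ∃ (n : ℕ) (φ j' : Γ(Y, U.1)),
      I.subschemeι.app U.1 φ = res (I.subschemeι.preimage_mono hUW) f ∧
      I.subschemeι.app U.1 j' = 0 ∧ res hVU j' = res hVU φ ^ n * j := by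
  obtain ⟨φ, hφ⟩ := I.subschemeι_app_surjective U (res (I.subschemeι.preimage_mono hUW) f)
  have hVφ : V = Y.basicOpen φ := eq_of_preimage_eq I.subschemeι <| by
    rw [I.subschemeι.preimage_basicOpen, hφ, basicOpen_res_eq_inf, hV]
  obtain ⟨n, j', hj', h⟩ := exists_mem_ideal_res_eq_pow_mul I
    (V := ⟨V, hVφ ▸ U.2.basicOpen φ⟩) φ hVφ hVU ((subschemeι_app_eq_zero_iff _ _).mp hj)
  exact ⟨n, φ, j', hφ, (subschemeι_app_eq_zero_iff _ _).mpr hj', h⟩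

/- `H¹` of the square-zero ideal vanishes on a cover by two charts: if `a f₁ⁿ + b f₂ᵐ = 1`, then
`j = b f₂ᵐ j + a f₁ⁿ j` with the first summand extending to `U₁` and the second to `U₂`. -/
theorem exists_eq_add_of_subschemeι_app_eq_zero (hI : I * I = ⊥) (hf : IsCoprime f₁ f₂)
    (h₁ : U₁.1 ≤ W) (h₂ : U₂.1 ≤ W)
    (hU₁ : I.subschemeι ⁻¹ᵁ U₁.1 = I.subscheme.basicOpen f₁)
    (hU₂ : I.subschemeι ⁻¹ᵁ U₂.1 = I.subscheme.basicOpen f₂)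
    {j : Γ(Y, U₁.1 ⊓ U₂.1)} (hj : I.subschemeι.app _ j = 0) :
    ∃ (j₁ : Γ(Y, U₁.1)) (j₂ : Γ(Y, U₂.1)), I.subschemeι.app _ j₁ = 0 ∧
      I.subschemeι.app _ j₂ = 0 ∧ j = res inf_le_left j₁ + res inf_le_right j₂ := by
  have := surjective_subschemeι_of_mul_self_eq_bot hI
  obtain ⟨m, φ₂, j₁, hφ₂, hj₁, e₁⟩ := exists_extension_of_subschemeι_app_eq_zero
    inf_le_left h₁ f₂ (by rw [Hom.preimage_inf, hU₂]) hj
  obtain ⟨n, φ₁, j₂, hφ₁, hj₂, e₂⟩ := exists_extension_of_subschemeι_app_eq_zero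
    inf_le_right h₂ f₁ (by rw [Hom.preimage_inf, hU₁, inf_comm]) hj
  obtain ⟨a, b, hab⟩ := hf.pow (m := n) (n := m)
  obtain ⟨β, hβ⟩ := I.subschemeι_app_surjective U₁ (res (I.subschemeι.preimage_mono h₁) b)
  obtain ⟨α, hα⟩ := I.subschemeι_app_surjective U₂ (res (I.subschemeι.preimage_mono h₂) a)
  refine ⟨β * j₁, α * j₂, by rw [map_mul, hj₁, mul_zero], by rw [map_mul, hj₂, mul_zero], ?_⟩
  have hone : I.subschemeι.app (U₁.1 ⊓ U₂.1) (1 - (res inf_le_right α * res inf_le_right φ₁ ^ n +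
      res inf_le_left β * res inf_le_left φ₂ ^ m)) = 0 := by
    simp only [map_sub, map_add, map_mul, map_pow, map_one, ← res_app, hα, hβ, hφ₁, hφ₂, res_res,
      sub_eq_zero]
    simpa only [map_add, map_mul, map_pow, map_one] using
      congr_arg (res (I.subschemeι.preimage_mono (inf_le_left.trans h₁))) hab.symm
  rw [map_mul, map_mul, e₁, e₂]
  linear_combination mul_eq_zero_of_subschemeι_app_eq_zero hI hone hj

theorem le_sup_of_isCoprime [Surjective I.subschemeι] (hf : IsCoprime f₁ f₂)
    (hU₁ : I.subschemeι ⁻¹ᵁ U₁.1 = I.subscheme.basicOpen f₁)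
    (hU₂ : I.subschemeι ⁻¹ᵁ U₂.1 = I.subscheme.basicOpen f₂) : W ≤ U₁.1 ⊔ U₂.1 := by
  intro y hy
  obtain ⟨z, rfl⟩ := I.subschemeι.surjective y
  by_contra h
  obtain ⟨h₁, h₂⟩ : z ∉ I.subscheme.basicOpen f₁ ∧ z ∉ I.subscheme.basicOpen f₂ := by
    rw [← hU₁, ← hU₂]
    exact not_or.mp h
  rw [← evaluation_eq_zero_iff_notMem_basicOpen _ z hy] at h₁ h₂
  obtain ⟨a, b, hab⟩ := hf
  simpa [h₁, h₂] using congr_arg (I.subscheme.evaluation _ z hy) hab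

theorem surjective_subschemeι_app_of_isCoprime (hI : I * I = ⊥) (hf : IsCoprime f₁ f₂)
    (h₁ : U₁.1 ≤ W) (h₂ : U₂.1 ≤ W)
    (hU₁ : I.subschemeι ⁻¹ᵁ U₁.1 = I.subscheme.basicOpen f₁)
    (hU₂ : I.subschemeι ⁻¹ᵁ U₂.1 = I.subscheme.basicOpen f₂) :
    Function.Surjective (I.subschemeι.app W) := by
  intro β
  have := surjective_subschemeι_of_mul_self_eq_bot hI
  have hcov := le_sup_of_isCoprime hf hU₁ hU₂
  obtain ⟨b₁, hb₁⟩ := I.subschemeι_app_surjective U₁ (res (I.subschemeι.preimage_mono h₁) β)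
  obtain ⟨b₂, hb₂⟩ := I.subschemeι_app_surjective U₂ (res (I.subschemeι.preimage_mono h₂) β)
  obtain ⟨j₁, j₂, hj₁, hj₂, hj⟩ := exists_eq_add_of_subschemeι_app_eq_zero hI hf h₁ h₂ hU₁ hU₂
    (j := res inf_le_left b₁ - res inf_le_right b₂)
    (by rw [map_sub, ← res_app, ← res_app, hb₁, hb₂, res_res, res_res, sub_self])
  obtain ⟨c, hc₁, hc₂⟩ := exists_glue_pair h₁ h₂ hcov (b₁ - j₁) (b₂ + j₂) (by
    rw [map_sub, map_add]
    linear_combination hj)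
  refine ⟨c, I.subscheme.sheaf.eq_of_locally_eq₂ (homOfLE (I.subschemeι.preimage_mono h₁))
    (homOfLE (I.subschemeι.preimage_mono h₂)) (I.subschemeι.preimage_mono hcov) _ _ ?_ ?_⟩
  · exact (res_app I.subschemeι h₁ c).trans (by rw [hc₁, map_sub, hb₁, hj₁, sub_zero]; rfl)
  · exact (res_app I.subschemeι h₂ c).trans (by rw [hc₂, map_add, hb₂, hj₂, add_zero]; rfl)

theorem isAffineOpen_of_isCoprime (hI : I * I = ⊥) (hf : IsCoprime f₁ f₂)
    (h₁ : U₁.1 ≤ W) (h₂ : U₂.1 ≤ W)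
    (hU₁ : I.subschemeι ⁻¹ᵁ U₁.1 = I.subscheme.basicOpen f₁)
    (hU₂ : I.subschemeι ⁻¹ᵁ U₂.1 = I.subscheme.basicOpen f₂) : IsAffineOpen W := by
  have := surjective_subschemeι_of_mul_self_eq_bot hI
  have hlift := surjective_subschemeι_app_of_isCoprime hI hf h₁ h₂ hU₁ hU₂
  obtain ⟨F, hF⟩ := hlift f₁
  obtain ⟨G, hG⟩ := hlift f₂
  obtain ⟨a, b, hab⟩ := hf
  obtain ⟨A, hA⟩ := hlift a
  obtain ⟨B, hB⟩ := hlift b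
  have hunit : IsUnit (A * F + B * G) := isUnit_of_subschemeι_app_eq_one hI <| by
    rw [map_add, map_mul, map_mul, hA, hB, hF, hG, hab]
  have hDF : Y.basicOpen F = U₁.1 := eq_of_preimage_eq I.subschemeι <| by
    rw [I.subschemeι.preimage_basicOpen, hF, hU₁]
  have hDG : Y.basicOpen G = U₂.1 := eq_of_preimage_eq I.subschemeι <| by
    rw [I.subschemeι.preimage_basicOpen, hG, hU₂]
  refine isAffineOpen_of_isAffineOpen_basicOpen W {F, G} ?_ ?_
  · exact Ideal.eq_top_of_isUnit_mem _ (Ideal.mem_span_pair.mpr ⟨A, B, rfl⟩) hunit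
  · rintro i (rfl | rfl)
    exacts [hDF ▸ U₁.2, hDG ▸ U₂.2]

end Charts

theorem exists_preimage_eq {X Y : Scheme.{u}} (i : X ⟶ Y) [IsClosedImmersion i] (U : X.Opens) :
    ∃ V : Y.Opens, i ⁻¹ᵁ V = U := by
  obtain ⟨V, hV, hVU⟩ := i.isClosedEmbedding.isInducing.isOpen_iff.mp U.2
  exact ⟨⟨V, hV⟩, SetLike.coe_injective hVU⟩

theorem exists_affineOpens_preimage_eq_inf_basicOpen (U : Y.affineOpens) (a : Γ(I.subscheme, ⊤)) :
    ∃ V : Y.affineOpens, I.subschemeι ⁻¹ᵁ V.1 =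
      I.subschemeι ⁻¹ᵁ U.1 ⊓ I.subscheme.basicOpen a := by
  obtain ⟨b, hb⟩ := I.subschemeι_app_surjective U (res le_top a)
  exact ⟨⟨_, U.2.basicOpen b⟩, by rw [I.subschemeι.preimage_basicOpen, hb, basicOpen_res_eq_inf]⟩

theorem exists_affineOpens_preimage_eq_basicOpen_add (hI : I * I = ⊥) {a b : Γ(I.subscheme, ⊤)}
    (ha : ∃ U : Y.affineOpens, I.subschemeι ⁻¹ᵁ U.1 = I.subscheme.basicOpen a)
    (hb : ∃ U : Y.affineOpens, I.subschemeι ⁻¹ᵁ U.1 = I.subscheme.basicOpen b) :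
    ∃ U : Y.affineOpens, I.subschemeι ⁻¹ᵁ U.1 = I.subscheme.basicOpen (a + b) := by
  have := surjective_subschemeι_of_mul_self_eq_bot hI
  obtain ⟨W, hW⟩ := exists_preimage_eq I.subschemeι (I.subscheme.basicOpen (a + b))
  have chart (c) (hc : ∃ U : Y.affineOpens, I.subschemeι ⁻¹ᵁ U.1 = I.subscheme.basicOpen c) :
      ∃ U : Y.affineOpens, U.1 ≤ W ∧ I.subschemeι ⁻¹ᵁ U.1 =
        I.subscheme.basicOpen (res (le_top : I.subschemeι ⁻¹ᵁ W ≤ ⊤) c) := by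
    obtain ⟨U, hU⟩ := hc
    obtain ⟨V, hV⟩ := exists_affineOpens_preimage_eq_inf_basicOpen U (a + b)
    have hVU : V.1 = U.1 ⊓ W := eq_of_preimage_eq I.subschemeι (by rw [hV, ← hW]; rfl)
    exact ⟨V, hVU ▸ inf_le_right, by rw [hV, basicOpen_res_eq_inf, hU, hW, inf_comm]⟩
  obtain ⟨U₁, h₁, hU₁⟩ := chart a ha
  obtain ⟨U₂, h₂, hU₂⟩ := chart b hb
  obtain ⟨u, hu⟩ := (isUnit_res_of_eq_basicOpen (a + b) hW le_top).exists_left_inv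
  exact ⟨⟨W, isAffineOpen_of_isCoprime hI ⟨u, u, by rw [← mul_add, ← map_add, hu]⟩
    h₁ h₂ hU₁ hU₂⟩, hW⟩

theorem isAffine_of_mul_self_eq_bot (hI : I * I = ⊥) [IsAffine I.subscheme] : IsAffine Y := by
  have := surjective_subschemeι_of_mul_self_eq_bot hI
  let 𝔞 : Ideal Γ(I.subscheme, ⊤) :=
    { carrier := {a | ∃ U : Y.affineOpens, I.subschemeι ⁻¹ᵁ U.1 = I.subscheme.basicOpen a}
      add_mem' := exists_affineOpens_preimage_eq_basicOpen_add hI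
      zero_mem' := ⟨⟨⊥, isAffineOpen_bot Y⟩, by rw [basicOpen_zero]; rfl⟩
      smul_mem' := by
        rintro c a ⟨U, hU⟩
        obtain ⟨V, hV⟩ := exists_affineOpens_preimage_eq_inf_basicOpen U c
        exact ⟨V, by rw [hV, hU, smul_eq_mul, basicOpen_mul, inf_comm]⟩ }
  have hspan : Ideal.span (𝔞 : Set Γ(I.subscheme, ⊤)) = ⊤ := by
    refine span_eq_top_of_forall_mem_basicOpen fun z ↦ ?_
    obtain ⟨U, hzU, -⟩ := exists_mem_affineOpens (Opens.mem_top (I.subschemeι z))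
    obtain ⟨_, ⟨a, rfl⟩, hza, haU⟩ := Opens.isBasis_iff_nbhd.mp (isBasis_basicOpen I.subscheme)
      (show z ∈ I.subschemeι ⁻¹ᵁ U.1 from hzU)
    obtain ⟨V, hV⟩ := exists_affineOpens_preimage_eq_inf_basicOpen U a
    exact ⟨a, ⟨V, hV.trans (inf_eq_right.mpr haU)⟩, hza⟩
  rw [Ideal.span_eq] at hspan
  obtain ⟨U, hU⟩ : (1 : Γ(I.subscheme, ⊤)) ∈ 𝔞 := hspan ▸ Submodule.mem_top
  have hUtop : U.1 = ⊤ := eq_of_preimage_eq I.subschemeι (by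
    rw [hU, basicOpen_of_isUnit _ isUnit_one]; rfl)
  have : IsAffine (⊤ : Y.Opens) := hUtop ▸ U.2
  exact .of_isIso Y.topIso.inv

theorem isReduced_of_nilradical_eq_bot (h : Y.nilradical = ⊥) : IsReduced Y := by
  refine ⟨fun W ↦ ⟨fun s hs ↦ section_ext_of_affineOpens fun U hU ↦ ?_⟩⟩
  have hmem : res hU s ∈ Y.nilradical.ideal U := hs.map (res hU)
  rw [h] at hmem
  simpa using hmem

theorem exists_nilradical_pow_eq_bot (Y : Scheme.{u}) [IsNoetherian Y] :
    ∃ n, Y.nilradical ^ n = ⊥ := by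
  obtain ⟨s, hs⟩ := exists_finite_affineOpens_cover Y
  choose n hn using fun U : s ↦ by
    have : IsNoetherianRing Γ(Y, U.1) := IsLocallyNoetherian.component_noetherian U.1
    exact IsNoetherianRing.isNilpotent_nilradical Γ(Y, U.1)
  refine ⟨∑ U, n U, IdealSheafData.ext_of_iSup_eq_top (fun U : s ↦ U.1) hs fun U ↦ ?_⟩
  rw [IdealSheafData.ideal_pow, IdealSheafData.ideal_bot]
  exact pow_eq_zero_of_le (Finset.single_le_sum (fun _ _ ↦ Nat.zero_le _) (Finset.mem_univ U))
    (hn U)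

theorem exists_mul_self_eq_bot [IsNoetherian Y] (hY : ¬ IsReduced Y) :
    ∃ I : Y.IdealSheafData, I ≠ ⊥ ∧ I * I = ⊥ := by
  by_contra! h
  have : _root_.IsReduced Y.IdealSheafData := (isReduced_iff_pow_one_lt 2 one_lt_two).mpr
    fun I hI ↦ by_contra fun hne ↦ h I hne (by rwa [← sq])
  obtain ⟨n, hn⟩ := exists_nilradical_pow_eq_bot Y
  exact hY (isReduced_of_nilradical_eq_bot (IsReduced.eq_zero _ ⟨n, hn⟩))

end SquareZero

section Trace

variable {X Y : Scheme.{u}} (π : X ⟶ Y) (x : X)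

theorem exists_linear_retraction {K L : Type*} [Field K] [Field L] (φ : K →+* L) :
    ∃ tr : L →+ K, (∀ a b, tr (φ a * b) = a * tr b) ∧ tr 1 = 1 := by
  let := φ.toAlgebra
  obtain ⟨g, hg⟩ := LinearMap.exists_leftInverse_of_injective (Algebra.linearMap K L)
    (LinearMap.ker_eq_bot.mpr φ.injective)
  refine ⟨g.toAddMonoidHom, fun a b ↦ ?_, by simpa using LinearMap.congr_fun hg 1⟩
  have hsmul := g.map_smul a b
  rwa [Algebra.smul_def] at hsmul

/-- A `κ(π x)`-linear retraction of the residue field extension `κ(π x) → κ(x)`, which takes over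
the role of the trace of a finite locally free cover. -/
noncomputable def residueTrace : X.residueField x →+ Y.residueField (π x) :=
  (exists_linear_retraction (π.residueFieldMap x).hom).choose

/-- The trace at `x` of a section over `π⁻¹ U`, a value at `π x`. -/
noncomputable def trace {U : Y.Opens} (hx : π x ∈ U) :
    Γ(X, π ⁻¹ᵁ U) →+ Y.residueField (π x) :=
  (residueTrace π x).comp (X.evaluation (π ⁻¹ᵁ U) x hx).hom.toAddMonoidHom

variable {U V : Y.Opens}

theorem trace_app_mul (hx : π x ∈ U) (r : Γ(Y, U)) (s : Γ(X, π ⁻¹ᵁ U)) :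
    trace π x hx (π.app U r * s) = Y.evaluation U (π x) hx r * trace π x hx s := by
  change residueTrace π x (X.evaluation (π ⁻¹ᵁ U) x hx (_ * _)) = _
  rw [map_mul, ← evaluation_naturality_apply π x hx]
  exact (exists_linear_retraction (π.residueFieldMap x).hom).choose_spec.1 _ _

theorem trace_one (hx : π x ∈ U) : trace π x hx (1 : Γ(X, π ⁻¹ᵁ U)) = 1 := by
  change residueTrace π x (X.evaluation (π ⁻¹ᵁ U) x hx 1) = 1
  rw [map_one]
  exact (exists_linear_retraction (π.residueFieldMap x).hom).choose_spec.2

theorem trace_app (hx : π x ∈ U) (r : Γ(Y, U)) :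
    trace π x hx (π.app U r) = Y.evaluation U (π x) hx r := by
  rw [← mul_one (π.app U r), trace_app_mul, trace_one, mul_one]

theorem trace_res (h : U ≤ V) (hx : π x ∈ U) (s : Γ(X, π ⁻¹ᵁ V)) :
    trace π x hx (res (π.preimage_mono h) s) = trace π x (h hx) s :=
  congr_arg (residueTrace π x) (evaluation_res _ s _)

end Trace

section TraceMem

variable {X Y : Scheme.{u}} {π : X ⟶ Y} {x : X} {I : Y.IdealSheafData} {U V : Y.affineOpens}

variable (π x I) in
/-- If `U` contains `π x`, the value `d · tr s` is taken at `π x` by a section of `I` over `U`. -/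
def TraceMem (d : Γ(Y, U.1)) (s : Γ(X, π ⁻¹ᵁ U.1)) : Prop :=
  ∃ r ∈ I.ideal U, ∀ hx : π x ∈ U.1,
    Y.evaluation U.1 (π x) hx r = Y.evaluation U.1 (π x) hx d * trace π x hx s

variable {d d' : Γ(Y, U.1)} {s s' : Γ(X, π ⁻¹ᵁ U.1)}

theorem TraceMem.zero : TraceMem π x I d (0 : Γ(X, π ⁻¹ᵁ U.1)) :=
  ⟨0, zero_mem _, fun _ ↦ by rw [map_zero, map_zero, mul_zero]⟩

theorem TraceMem.add (hs : TraceMem π x I d s) (hs' : TraceMem π x I d s') :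
    TraceMem π x I d (s + s') := by
  obtain ⟨r, hr, e⟩ := hs
  obtain ⟨r', hr', e'⟩ := hs'
  exact ⟨r + r', add_mem hr hr', fun hx ↦ by rw [map_add, map_add, mul_add, e, e']⟩

theorem TraceMem.app_mul (c : Γ(Y, U.1)) (h : TraceMem π x I d s) :
    TraceMem π x I d (π.app U.1 c * s) := by
  obtain ⟨r, hr, e⟩ := h
  refine ⟨c * r, Ideal.mul_mem_left _ _ hr, fun hx ↦ ?_⟩
  rw [map_mul, trace_app_mul, e]
  ring

theorem TraceMem.zero_left : TraceMem π x I (0 : Γ(Y, U.1)) s :=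
  ⟨0, zero_mem _, fun _ ↦ by rw [map_zero, zero_mul]⟩

theorem TraceMem.add_left (hd : TraceMem π x I d s) (hd' : TraceMem π x I d' s) :
    TraceMem π x I (d + d') s := by
  obtain ⟨r, hr, e⟩ := hd
  obtain ⟨r', hr', e'⟩ := hd'
  exact ⟨r + r', add_mem hr hr', fun hx ↦ by rw [map_add, map_add, add_mul, e, e']⟩

theorem TraceMem.mul_left (c : Γ(Y, U.1)) (h : TraceMem π x I d s) :
    TraceMem π x I (c * d) s := by
  obtain ⟨r, hr, e⟩ := h
  exact ⟨c * r, Ideal.mul_mem_left _ _ hr, fun hx ↦ by rw [map_mul, map_mul, e, mul_assoc]⟩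

theorem TraceMem.restrict (hUV : U.1 ≤ V.1) {d : Γ(Y, V.1)} {s : Γ(X, π ⁻¹ᵁ V.1)}
    (h : TraceMem π x I d s) :
    TraceMem π x I (res hUV d) (res (π.preimage_mono hUV) s) := by
  obtain ⟨r, hr, e⟩ := h
  refine ⟨_, res_mem_ideal I hUV hr, fun hx ↦ ?_⟩
  rw [evaluation_res, evaluation_res, trace_res, e]

/- If `d` vanishes at `π x`, the zero section does; otherwise `π x` lies in `V` and the section
over `V` extends after multiplication by a power of `f`. -/
theorem TraceMem.exists_pow {f : Γ(Y, U.1)} (hV : V.1 = Y.basicOpen f) (hVU : V.1 ≤ U.1)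
    (h : TraceMem π x I (res hVU d) (res (π.preimage_mono hVU) s)) :
    ∃ n, TraceMem π x I (f ^ n * d) s := by
  obtain ⟨r, hr, e⟩ := h
  obtain ⟨n, r', hr', er'⟩ := exists_mem_ideal_res_eq_pow_mul I f hV hVU hr
  by_cases hxV : π x ∈ V.1
  · refine ⟨n, r', hr', fun hx ↦ ?_⟩
    rw [← evaluation_res hVU r' hxV, er', map_mul, map_pow, e, evaluation_res, evaluation_res,
      trace_res _ _ hVU, map_mul, map_pow, mul_assoc]
  · refine ⟨1, 0, zero_mem _, fun hx ↦ ?_⟩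
    rw [hV, ← evaluation_eq_zero_iff_notMem_basicOpen _ _ hx] at hxV
    rw [pow_one, map_mul, hxV, map_zero, zero_mul, zero_mul]

theorem exists_finset_forall_traceMem [IsFinite π] (U : Y.affineOpens) :
    ∃ G : Finset Γ(X, π ⁻¹ᵁ U.1), ∀ (x : X) (I : Y.IdealSheafData) (d : Γ(Y, U.1)),
      (∀ s ∈ G, TraceMem π x I d s) → ∀ s : Γ(X, π ⁻¹ᵁ U.1), TraceMem π x I d s := by
  let := (π.app U.1).hom.toAlgebra
  obtain ⟨G, hG⟩ : Module.Finite Γ(Y, U.1) Γ(X, π ⁻¹ᵁ U.1) := IsFinite.finite_app π U.1 U.2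
  refine ⟨G, fun x I d hd s ↦ ?_⟩
  have hs : s ∈ Submodule.span Γ(Y, U.1) (G : Set Γ(X, π ⁻¹ᵁ U.1)) := hG ▸ Submodule.mem_top
  induction hs using Submodule.span_induction with
  | mem s hs => exact hd s hs
  | zero => exact .zero
  | add _ _ _ _ h h' => exact h.add h'
  | smul c _ _ h => exact h.app_mul c

theorem exists_pow_mul_forall_traceMem [IsFinite π] {f : Γ(Y, U.1)} (hV : V.1 = Y.basicOpen f)
    (hVU : V.1 ≤ U.1) (h : ∀ s, TraceMem π x I (res hVU d) s) :
    ∃ n, ∀ s, TraceMem π x I (f ^ n * d) s := by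
  obtain ⟨G, hG⟩ := exists_finset_forall_traceMem (π := π) U
  have hev (s) : ∀ᶠ n in Filter.atTop, TraceMem π x I (f ^ n * d) s := by
    obtain ⟨n, hn⟩ := TraceMem.exists_pow hV hVU (h (res (π.preimage_mono hVU) s))
    refine Filter.eventually_atTop.mpr ⟨n, fun m hm ↦ ?_⟩
    obtain ⟨l, rfl⟩ := Nat.exists_eq_add_of_le' hm
    rw [pow_add, mul_assoc]
    exact hn.mul_left _
  obtain ⟨n, hn⟩ := ((Filter.eventually_all_finset G).mpr fun s _ ↦ hev s).exists
  exact ⟨n, hG x I _ hn⟩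

theorem forall_traceMem_res [IsAffineHom π] {f : Γ(Y, U.1)} (hV : V.1 = Y.basicOpen f)
    (hVU : V.1 ≤ U.1) (h : ∀ s, TraceMem π x I d s) (s : Γ(X, π ⁻¹ᵁ V.1)) :
    TraceMem π x I (res hVU d) s := by
  obtain ⟨n, t, ht⟩ := exists_res_eq_pow_mul (U.2.preimage π) (π.app U.1 f)
    (by rw [hV, π.preimage_basicOpen]) (π.preimage_mono hVU) s
  obtain ⟨u, hu⟩ := ((isUnit_res_of_eq_basicOpen f hV hVU).pow n).exists_left_inv
  have hs : π.app V.1 u * res (π.preimage_mono hVU) t = s := by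
    rw [ht, res_app π hVU, ← map_pow, ← mul_assoc, ← map_mul, hu, map_one, one_mul]
  exact hs ▸ ((h t).restrict hVU).app_mul u

variable (π x I) in
/-- The ideal sheaf of those sections `d` of `I` for which `d · tr s` is the value of a section of
`I` whenever `s` is a section of the structure sheaf of `X`. -/
noncomputable def traceColon [IsFinite π] : Y.IdealSheafData where
  ideal U :=
    { carrier := {d | d ∈ I.ideal U ∧ ∀ s, TraceMem π x I d s}
      add_mem' := fun hd hd' ↦ ⟨add_mem hd.1 hd'.1, fun s ↦ (hd.2 s).add_left (hd'.2 s)⟩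
      zero_mem' := ⟨zero_mem _, fun _ ↦ .zero_left⟩
      smul_mem' := fun c _ hd ↦ ⟨Ideal.mul_mem_left _ _ hd.1, fun s ↦ (hd.2 s).mul_left c⟩ }
  map_ideal_basicOpen U f := by
    have hVU : (Y.affineBasicOpen f).1 ≤ U.1 := Y.basicOpen_le f
    refine le_antisymm (Ideal.map_le_iff_le_comap.mpr fun d hd ↦
      ⟨res_mem_ideal I hVU hd.1, forall_traceMem_res rfl hVU hd.2⟩)
      fun (d : Γ(Y, (Y.affineBasicOpen f).1)) hd ↦ ?_
    have hV : (Y.affineBasicOpen f).1 = Y.basicOpen f := rfl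
    obtain ⟨n, d', hd', e⟩ := exists_mem_ideal_res_eq_pow_mul I f hV hVU hd.1
    obtain ⟨m, hm⟩ := exists_pow_mul_forall_traceMem (d := d') hV hVU fun s ↦
      e ▸ (hd.2 s).mul_left _
    obtain ⟨u, hu⟩ := ((isUnit_res_of_eq_basicOpen f hV hVU).pow (m + n)).exists_left_inv
    have hd_eq : d = u * res hVU (f ^ m * d') := by
      rw [map_mul, map_pow, e]
      linear_combination -d * hu
    exact hd_eq ▸ Ideal.mul_mem_left _ _
      (Ideal.mem_map_of_mem _ ⟨Ideal.mul_mem_left _ _ hd', hm⟩)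

theorem traceColon_le [IsFinite π] : traceColon π x I ≤ I :=
  fun _ _ hd ↦ hd.1

end TraceMem

section BaseChange

open Limits

theorem mem_map_ker_of_isPushout {R A B P : CommRingCat.{u}} {f : R ⟶ A} {g : R ⟶ B}
    {f' : B ⟶ P} {g' : A ⟶ P} (h : IsPushout f g g' f') (hg : Function.Surjective g.hom) {a : A}
    (ha : g' a = 0) : a ∈ (RingHom.ker g.hom).map f.hom := by
  let q := Ideal.Quotient.mk ((RingHom.ker g.hom).map f.hom)
  have hker : RingHom.ker g.hom ≤ RingHom.ker (q.comp f.hom) := fun r hr ↦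
    Ideal.Quotient.eq_zero_iff_mem.mpr (Ideal.mem_map_of_mem _ hr)
  have hq : f ≫ CommRingCat.ofHom q = g ≫ CommRingCat.ofHom
      (g.hom.liftOfSurjective hg ⟨q.comp f.hom, hker⟩) := by
    ext r
    exact (g.hom.liftOfRightInverse_comp_apply _
      (Function.rightInverse_surjInv hg) ⟨q.comp f.hom, hker⟩ r).symm
  have hqa : q a = h.desc _ _ hq (g' a) :=
    (ConcreteCategory.congr_hom (h.inl_desc (CommRingCat.ofHom q) _ hq) a).symm
  rw [ha, map_zero] at hqa
  exact Ideal.Quotient.eq_zero_iff_mem.mp hqa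

variable {X Y : Scheme.{u}}

theorem mem_map_ideal_of_fst_app_eq_zero (π : X ⟶ Y) [IsAffineHom π] (J : Y.IdealSheafData)
    (U : Y.affineOpens) {s : Γ(X, π ⁻¹ᵁ U.1)}
    (hs : (pullback.fst π J.subschemeι).app (π ⁻¹ᵁ U.1) s = 0) :
    s ∈ (J.ideal U).map (π.app U.1).hom := by
  have H := (IsPullback.of_hasPullback π J.subschemeι)
  have hle : pullback.fst π J.subschemeι ⁻¹ᵁ π ⁻¹ᵁ U.1 ≤
      pullback.snd π J.subschemeι ⁻¹ᵁ J.subschemeι ⁻¹ᵁ U.1 := by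
    rw [← Hom.comp_preimage, ← Hom.comp_preimage, H.w]
  have hpush := (isIso_pushoutSection_iff H (le_refl (J.subschemeι ⁻¹ᵁ U.1))
    (le_refl (π ⁻¹ᵁ U.1)) (inf_eq_left.mpr hle).symm).mp
    (isIso_pushoutSection_of_isAffineOpen _ _ _ _ U.2 (U.2.preimage _) (U.2.preimage _))
  have hmem := mem_map_ker_of_isPushout hpush (a := s)
    (by simpa [Hom.appLE_eq_app] using J.subschemeι_app_surjective U)
    (by simpa [Hom.appLE_eq_app] using hs)
  rw [← J.ker_subschemeι_app U]
  simpa [Hom.appLE_eq_app] using hmem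

theorem app_app_eq_res_of_comp_eq {P X Y Z : Scheme.{u}} {p : P ⟶ X} {q : P ⟶ Z} {π : X ⟶ Y}
    {i : Z ⟶ Y} (e : p ≫ π = q ≫ i) {U : Y.Opens} {c : Γ(Y, U)} {β : Γ(Z, ⊤)}
    (hc : i.app U c = res le_top β) :
    p.app (π ⁻¹ᵁ U) (π.app U c) = res le_top (q.appTop β) := by
  have h := ConcreteCategory.congr_hom (Hom.congr_app e U) c
  rw [Hom.comp_app, Hom.comp_app] at h
  refine h.trans ?_
  change res (congr_arg (· ⁻¹ᵁ U) e).le (q.app (i ⁻¹ᵁ U) (i.app U c)) = _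
  rw [hc, ← res_appTop]
  exact res_res _ _ _

theorem exists_forall_res_sub_app_mem_map_ideal [IsAffine X] (π : X ⟶ Y) [IsAffineHom π]
    (J : Y.IdealSheafData) (β : Γ(J.subscheme, ⊤)) :
    ∃ b : Γ(X, ⊤), ∀ (U : Y.affineOpens) (c : Γ(Y, U.1)),
      J.subschemeι.app U.1 c = res le_top β →
      res le_top b - π.app U.1 c ∈ (J.ideal U).map (π.app U.1).hom := by
  obtain ⟨b, hb⟩ := (IsClosedImmersion.isAffine_surjective_of_isAffine
    (pullback.fst π J.subschemeι)).2 ((pullback.snd π J.subschemeι).appTop β)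
  refine ⟨b, fun U c hc ↦ mem_map_ideal_of_fst_app_eq_zero π J U ?_⟩
  rw [map_sub, sub_eq_zero, ← res_appTop, hb]
  exact (app_app_eq_res_of_comp_eq pullback.condition hc).symm

end BaseChange

section Lifting

variable {X Y : Scheme.{u}} {π : X ⟶ Y} {x : X} {I : Y.IdealSheafData}

theorem traceMem_one_of_mem_map [IsFinite π] {U : Y.affineOpens} {z : Γ(X, π ⁻¹ᵁ U.1)}
    (hz : z ∈ ((traceColon π x I).ideal U).map (π.app U.1).hom) : TraceMem π x I 1 z := by
  suffices ∀ s, TraceMem π x I 1 (s * z) by simpa only [one_mul] using this 1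
  refine Submodule.span_induction ?_ (fun s ↦ ?_) (fun z z' _ _ h h' s ↦ ?_)
    (fun c z _ h s ↦ ?_) hz
  · rintro _ ⟨d, hd, rfl⟩ s
    obtain ⟨r, hr, e⟩ := hd.2 s
    refine ⟨r, hr, fun hx ↦ ?_⟩
    rw [e, map_one, one_mul, mul_comm s]
    exact (trace_app_mul π x hx d s).symm
  · rw [mul_zero]
    exact .zero
  · exact mul_add s z z' ▸ (h s).add (h' s)
  · rw [smul_eq_mul, ← mul_assoc]
    exact h _

theorem notMem_support_of_mem_basicOpen {U : Y.affineOpens} {s : Γ(Y, U.1)} (hs : s ∈ I.ideal U)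
    {y : Y} (hy : y ∈ Y.basicOpen s) : y ∉ I.support := fun h ↦
  (mem_zeroLocus_iff ..).mp ((I.mem_support_iff_of_mem (Y.basicOpen_le s hy)).mp h) s hs hy

theorem eq_of_evaluation_eq [IsReduced Y] {η : Y} (hI : (I.support : Set Y)ᶜ ⊆ closure {η})
    {U : Y.affineOpens} {r r' : Γ(Y, U.1)} (hr : r - r' ∈ I.ideal U)
    (h : ∀ hη : η ∈ U.1, Y.evaluation U.1 η hη r = Y.evaluation U.1 η hη r') : r = r' := by
  rw [← sub_eq_zero, ← basicOpen_eq_bot_iff, eq_bot_iff]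
  intro y hy
  have hη : η ∈ Y.basicOpen (r - r') := by
    obtain ⟨_, hmem, rfl⟩ := mem_closure_iff.mp (hI (notMem_support_of_mem_basicOpen hr hy)) _
      (Y.basicOpen (r - r')).2 hy
    exact hmem
  have hηU := Y.basicOpen_le _ hη
  rw [← evaluation_ne_zero_iff_mem_basicOpen _ _ hηU, map_sub, sub_ne_zero] at hη
  exact absurd (h hηU) hη

theorem appTop_eq_of_forall_affineOpens {f : Γ(Y, ⊤)} {β : Γ(X, ⊤)}
    (h : ∀ U : Y.affineOpens, π.app U.1 (res le_top f) = res le_top β) : π.appTop f = β := by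
  refine X.sheaf.eq_of_locally_eq' (fun U : Y.affineOpens ↦ π ⁻¹ᵁ U.1) ⊤
    (fun _ ↦ homOfLE le_top) (fun x _ ↦ ?_) _ _ fun U ↦ (res_appTop π U.1 f).trans (h U)
  obtain ⟨U, hxU, -⟩ := exists_mem_affineOpens (Opens.mem_top (π x))
  exact Opens.mem_iSup.mpr ⟨U, hxU⟩

theorem subschemeι_app_eq_res_of_le {I J : Y.IdealSheafData} (h : J ≤ I) {U : Y.Opens}
    {c : Γ(Y, U)} {β : Γ(J.subscheme, ⊤)} (hc : J.subschemeι.app U c = res le_top β) :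
    I.subschemeι.app U c = res le_top ((IdealSheafData.inclusion h).appTop β) := by
  have e : I.subschemeι ≫ 𝟙 Y = IdealSheafData.inclusion h ≫ J.subschemeι := by
    rw [IdealSheafData.inclusion_subschemeι, Category.comp_id]
  exact app_app_eq_res_of_comp_eq e hc

theorem exists_appTop_eq_of_evaluation_eq [IsReduced Y] {η : Y}
    (hI : (I.support : Set Y)ᶜ ⊆ closure {η}) (γ : Γ(I.subscheme, ⊤)) (v : Y.residueField η)
    (h : ∀ U : Y.affineOpens, ∃ r : Γ(Y, U.1), I.subschemeι.app U.1 r = res le_top γ ∧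
      ∀ hη : η ∈ U.1, Y.evaluation U.1 η hη r = v) :
    ∃ f : Γ(Y, ⊤), I.subschemeι.appTop f = γ ∧ Y.evaluation ⊤ η (Opens.mem_top η) f = v := by
  choose r hrγ hrv using h
  obtain ⟨f, hf⟩ := exists_glue_of_affineOpens r fun U V hUV ↦ by
    refine eq_of_evaluation_eq hI ?_ fun hη ↦ ?_
    · rw [← subschemeι_app_eq_zero_iff, map_sub, ← res_app, hrγ, hrγ, res_res, sub_self]
    · rw [evaluation_res, hrv, hrv]
  obtain ⟨U, hηU, -⟩ := exists_mem_affineOpens (Opens.mem_top η)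
  refine ⟨f, appTop_eq_of_forall_affineOpens fun U ↦ (hf U).symm ▸ hrγ U, ?_⟩
  rw [← hrv U hηU, ← hf U, evaluation_res]

theorem exists_appTop_eq_of_traceColon [IsAffine X] [IsFinite π] [IsReduced Y]
    (hI : (I.support : Set Y)ᶜ ⊆ closure {π x}) (β : Γ((traceColon π x I).subscheme, ⊤)) :
    ∃ f : Γ(Y, ⊤),
      I.subschemeι.appTop f = (IdealSheafData.inclusion traceColon_le).appTop β := by
  obtain ⟨b, hb⟩ := exists_forall_res_sub_app_mem_map_ideal π (traceColon π x I) β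
  obtain ⟨f, hf, -⟩ := exists_appTop_eq_of_evaluation_eq hI
    ((IdealSheafData.inclusion traceColon_le).appTop β) (trace π x (Opens.mem_top (π x)) b)
    fun U ↦ by
      obtain ⟨c, hc⟩ := (traceColon π x I).subschemeι_app_surjective U (res le_top β)
      obtain ⟨j, hj, ej⟩ := traceMem_one_of_mem_map (hb U c hc)
      refine ⟨c + j, ?_, fun hx ↦ ?_⟩
      · rw [map_add, (subschemeι_app_eq_zero_iff U j).mpr hj, add_zero]
        exact subschemeι_app_eq_res_of_le _ hc
      · rw [map_add, ej, map_sub, trace_app, map_one, one_mul, add_sub_cancel]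
        exact trace_res π x le_top hx b
  exact ⟨f, hf⟩

theorem subschemeι_appTop_eq_zero_iff {f : Γ(Y, ⊤)} :
    I.subschemeι.appTop f = 0 ↔ ∀ U : Y.affineOpens, res le_top f ∈ I.ideal U := by
  refine ⟨fun h U ↦ ?_, fun h ↦ appTop_eq_of_forall_affineOpens fun U ↦ ?_⟩
  · rw [← subschemeι_app_eq_zero_iff, ← res_appTop, h, map_zero]
  · rw [map_zero, subschemeι_app_eq_zero_iff]
    exact h U

theorem exists_evaluation_eq_mul_trace [IsFinite π] [IsReduced Y]
    (hI : (I.support : Set Y)ᶜ ⊆ closure {π x}) {m : Γ(Y, ⊤)}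
    (hm : (traceColon π x I).subschemeι.appTop m = 0) (a : Γ(X, ⊤)) :
    ∃ r : Γ(Y, ⊤), I.subschemeι.appTop r = 0 ∧ Y.evaluation ⊤ (π x) (Opens.mem_top _) r =
      Y.evaluation ⊤ (π x) (Opens.mem_top _) m * trace π x (Opens.mem_top _) a := by
  refine exists_appTop_eq_of_evaluation_eq hI 0 _ fun U ↦ ?_
  obtain ⟨r, hr, e⟩ := (subschemeι_appTop_eq_zero_iff.mp hm U).2 (res le_top a)
  refine ⟨r, by rw [map_zero, subschemeι_app_eq_zero_iff]; exact hr, fun hx ↦ ?_⟩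
  rw [e, evaluation_res]
  exact congr_arg _ (trace_res π x le_top hx a)

theorem map_sum_mul_eq_of_sum_mul_eq_one {R A K ι : Type*} [CommRing R] [CommRing A] [CommRing K]
    [Fintype ι] {φ : R →+* A} {ev : R →+* K} {tr : A →+ K} (tr_one : tr 1 = 1)
    (tr_mul : ∀ s a, tr (φ s * a) = ev s * tr a) {s r : ι → R} {a : ι → A} {m : R}
    (ha : ∑ i, a i * φ (s i) = 1) (hr : ∀ i, ev (r i) = ev m * tr (a i)) :
    ev (∑ i, s i * r i) = ev m := by
  rw [← mul_one (ev m), ← tr_one, ← ha]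
  simp only [map_sum, map_mul, hr, mul_comm (a _), tr_mul, Finset.mul_sum, mul_left_comm]

theorem exists_sum_mul_appTop_eq_one [IsAffine X] (π : X ⟶ Y) {S : Set Γ(Y, ⊤)}
    (hS : ∀ y, ∃ s ∈ S, y ∈ Y.basicOpen s) :
    ∃ t : Finset Γ(Y, ⊤), ↑t ⊆ S ∧ ∃ a : t → Γ(X, ⊤), ∑ s, a s * π.appTop s.1 = 1 := by
  have hspan : Ideal.span (π.appTop '' S) = ⊤ := span_eq_top_of_forall_mem_basicOpen fun x ↦ by
    obtain ⟨s, hs, hxs⟩ := hS (π x)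
    exact ⟨_, Set.mem_image_of_mem _ hs, (π.preimage_basicOpen s).le hxs⟩
  exact (Submodule.mem_span_image_iff_exists_fun _).mp ((Ideal.eq_top_iff_one _).mp hspan)

/- Writing `1 = ∑ aₛ · π^* s` on `X` and taking traces gives `m = ∑ (m · tr aₛ) · s`. -/
theorem mem_span_of_traceColon [IsAffine X] [IsFinite π] [IsReduced Y]
    (hI : (I.support : Set Y)ᶜ ⊆ closure {π x}) {m : Γ(Y, ⊤)}
    (hm : (traceColon π x I).subschemeι.appTop m = 0) {S : Set Γ(Y, ⊤)}
    (hS : ∀ y, ∃ s ∈ S, y ∈ Y.basicOpen s) : m ∈ Ideal.span S := by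
  obtain ⟨t, ht, a, ha⟩ := exists_sum_mul_appTop_eq_one π hS
  choose r hrI hr using fun s ↦ exists_evaluation_eq_mul_trace hI hm (a s)
  have hev := map_sum_mul_eq_of_sum_mul_eq_one (φ := π.appTop.hom)
    (ev := (Y.evaluation ⊤ (π x) (Opens.mem_top _)).hom) (tr := trace π x (Opens.mem_top _))
    (trace_one π x _) (trace_app_mul π x _) ha hr
  have hmI : I.subschemeι.appTop m = 0 := subschemeι_appTop_eq_zero_iff.mpr fun U ↦
    (subschemeι_appTop_eq_zero_iff.mp hm U).1
  have hm_eq : m = ∑ s : t, s.1 * r s := section_ext_of_affineOpens fun U hU ↦ by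
    refine eq_of_evaluation_eq hI ?_ fun hη ↦ ?_
    · rw [← map_sub]
      refine subschemeι_appTop_eq_zero_iff.mp ?_ U
      simp [hmI, hrI]
    · rw [evaluation_res, evaluation_res]
      exact hev.symm
  rw [hm_eq]
  exact sum_mem fun s _ ↦ Ideal.mul_mem_right _ _ (Ideal.subset_span (ht s.2))

end Lifting

section Colon

variable {X Y : Scheme.{u}} {π : X ⟶ Y} {x : X} {I : Y.IdealSheafData}

theorem exists_evaluation_eq_mul {U : Y.Opens} (hU : IsAffineOpen U) {y : Y} (hy : y ∈ U)
    (v : Y.residueField y) : ∃ a c : Γ(Y, U), Y.evaluation U y hy c ≠ 0 ∧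
      Y.evaluation U y hy a = Y.evaluation U y hy c * v := by
  obtain ⟨σ, rfl⟩ := IsLocalRing.residue_surjective v
  obtain ⟨W, hyW, σ, rfl⟩ := Y.presheaf.exists_germ_eq σ
  obtain ⟨c, hcW, hyc⟩ := hU.exists_basicOpen_le (V := W) ⟨y, hyW⟩ hy
  obtain ⟨n, a, ha⟩ := exists_res_eq_pow_mul hU c rfl (Y.basicOpen_le c) (res hcW σ)
  have hc : Y.evaluation U y hy c ≠ 0 := (evaluation_ne_zero_iff_mem_basicOpen _ _ hy c).mpr hyc
  refine ⟨a, c ^ n, by rw [map_pow]; exact pow_ne_zero _ hc, ?_⟩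
  have hev := congr_arg (Y.evaluation (Y.basicOpen c) y hyc) ha
  rw [map_mul, map_pow, evaluation_res, evaluation_res, evaluation_res] at hev
  rw [hev, map_pow]
  rfl

theorem exists_traceMem_mul {U : Y.affineOpens} (hx : π x ∈ U.1) {i : Γ(Y, U.1)}
    (hi : i ∈ I.ideal U) (s : Γ(X, π ⁻¹ᵁ U.1)) :
    ∃ c, Y.evaluation U.1 (π x) hx c ≠ 0 ∧ TraceMem π x I (c * i) s := by
  obtain ⟨a, c, hc, e⟩ := exists_evaluation_eq_mul U.2 hx (trace π x hx s)
  refine ⟨c, hc, a * i, Ideal.mul_mem_left _ _ hi, fun _ ↦ ?_⟩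
  rw [map_mul, map_mul, e]
  ring

theorem exists_mem_traceColon [IsFinite π] {U : Y.affineOpens} (hx : π x ∈ U.1) {i : Γ(Y, U.1)}
    (hi : i ∈ I.ideal U) (hxi : Y.evaluation U.1 (π x) hx i ≠ 0) :
    ∃ d ∈ (traceColon π x I).ideal U, Y.evaluation U.1 (π x) hx d ≠ 0 := by
  classical
  obtain ⟨G, hG⟩ := exists_finset_forall_traceMem (π := π) U
  choose c hc htr using exists_traceMem_mul (π := π) hx hi
  refine ⟨(∏ g ∈ G, c g) * i, ⟨Ideal.mul_mem_left _ _ hi, hG x I _ fun g hg ↦ ?_⟩, ?_⟩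
  · rw [← Finset.prod_erase_mul G c hg, mul_assoc]
    exact (htr g).mul_left _
  · rw [map_mul, map_prod]
    exact mul_ne_zero (Finset.prod_ne_zero_iff.mpr fun g _ ↦ hc g) hxi

theorem traceColon_ne_bot [IsFinite π] (hx : π x ∉ I.support) : traceColon π x I ≠ ⊥ := by
  obtain ⟨U, hxU, -⟩ := exists_mem_affineOpens (Opens.mem_top (π x))
  rw [I.mem_support_iff_of_mem hxU, mem_zeroLocus_iff] at hx
  push Not at hx
  obtain ⟨i, hi, hxi⟩ := hx
  obtain ⟨d, hd, hxd⟩ := exists_mem_traceColon hxU hi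
    ((evaluation_ne_zero_iff_mem_basicOpen _ _ hxU i).mpr hxi)
  intro hbot
  rw [hbot, IdealSheafData.ideal_bot, Pi.bot_apply, Ideal.mem_bot] at hd
  exact hxd (hd ▸ map_zero _)

theorem exists_closure_singleton_mem_nhds {T : Type*} [TopologicalSpace T] [NoetherianSpace T]
    [QuasiSober T] {O : Set T} (hO : IsOpen O) (hne : O.Nonempty) :
    ∃ η ∈ O, closure {η} ∈ nhds η := by
  obtain ⟨y, hy⟩ := hne
  obtain ⟨η, hη⟩ := QuasiSober.sober (isIrreducible_irreducibleComponent (x := y))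
    isClosed_irreducibleComponent
  obtain ⟨U, hU, hUne, hle⟩ := NoetherianSpace.exists_isOpen_nonempty_subset_irreducibleComponent
    _ (irreducibleComponent_mem_irreducibleComponents y)
  have hηU : η ∈ U := (hη.mem_open_set_iff hU).mpr
    (hUne.mono fun z hz ↦ ⟨hle hz, hz⟩)
  refine ⟨η, (hη.mem_open_set_iff hO).mpr ⟨y, mem_irreducibleComponent, hy⟩, ?_⟩
  rw [hη.def]
  exact Filter.mem_of_superset (hU.mem_nhds hηU) hle

theorem exists_le_compl_support_subset_closure [IsNoetherian Y] [IsReduced Y] (hI : I ≠ ⊥) :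
    ∃ J ≤ I, ∃ η ∉ J.support, (J.support : Set Y)ᶜ ⊆ closure {η} := by
  obtain ⟨η, hηI, hη⟩ := exists_closure_singleton_mem_nhds I.support.2.isOpen_compl
    (Set.nonempty_compl.mpr fun h ↦
      hI (IdealSheafData.support_eq_top_iff.mp (SetLike.coe_injective h)))
  let Z : Closeds Y := ⟨(interior (closure {η}))ᶜ, isOpen_interior.isClosed_compl⟩
  have hsupp : ((I * IdealSheafData.vanishingIdeal Z).support : Set Y)ᶜ =
      (I.support : Set Y)ᶜ ∩ interior (closure {η}) := by
    rw [IdealSheafData.support_mul, Closeds.coe_sup, Set.compl_union,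
      IdealSheafData.coe_support_vanishingIdeal]
    exact congr_arg _ (compl_compl _)
  refine ⟨I * IdealSheafData.vanishingIdeal Z, fun U ↦ Ideal.mul_le_left, η, ?_, ?_⟩
  · exact hsupp.ge ⟨hηI, mem_interior_iff_mem_nhds.mpr hη⟩
  · exact hsupp.trans_subset (Set.inter_subset_right.trans interior_subset)

end Colon

section Reduced

variable {X Y : Scheme.{u}} {I : Y.IdealSheafData}

theorem exists_traceColon_ne_bot (π : X ⟶ Y) [IsFinite π] [Surjective π] [IsNoetherian Y]
    [IsReduced Y] (hI : I ≠ ⊥) :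
    ∃ x, ∃ J ≤ I, (J.support : Set Y)ᶜ ⊆ closure {π x} ∧ traceColon π x J ≠ ⊥ := by
  obtain ⟨J, hJ, η, hη, hsupp⟩ := exists_le_compl_support_subset_closure hI
  obtain ⟨x, rfl⟩ := π.surjective η
  exact ⟨x, J, hJ, hsupp, traceColon_ne_bot hη⟩

theorem exists_basicOpen_eq_of_isClosed (V : Y.Opens) (hV : IsClosed (V : Set Y)) :
    ∃ s : Γ(Y, ⊤), Y.basicOpen s = V := by
  let V' : Y.Opens := ⟨(V : Set Y)ᶜ, hV.isOpen_compl⟩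
  have hinf : V ⊓ V' = ⊥ := Opens.ext (Set.inter_compl_self _)
  have hsup : ⊤ ≤ V ⊔ V' := fun y _ ↦ em (y ∈ V)
  obtain ⟨s, hs, hs'⟩ := exists_glue_pair le_top le_top hsup 1 0 (by
    have : Subsingleton Γ(Y, V ⊓ V') := hinf ▸ inferInstance
    exact Subsingleton.elim _ _)
  have hV : V ≤ Y.basicOpen s := by
    rw [← inf_eq_left, ← basicOpen_res_eq_inf le_top, hs, basicOpen_one]
  have hV' : V' ⊓ Y.basicOpen s = ⊥ := by
    rw [← basicOpen_res_eq_inf le_top, hs', basicOpen_zero]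
  refine ⟨s, le_antisymm (fun y hy ↦ ?_) hV⟩
  by_contra hyV
  exact (hV'.le ⟨hyV, hy⟩ : y ∈ (⊥ : Y.Opens))

theorem preimage_basicOpen_of_appTop_eq {J : Y.IdealSheafData} (h : J ≤ I) {f : Γ(Y, ⊤)}
    {β : Γ(J.subscheme, ⊤)} (hf : I.subschemeι.appTop f = (IdealSheafData.inclusion h).appTop β) :
    I.subschemeι ⁻¹ᵁ Y.basicOpen f = IdealSheafData.inclusion h ⁻¹ᵁ J.subscheme.basicOpen β := by
  rw [Hom.preimage_basicOpen_top, Hom.preimage_basicOpen_top, hf]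

/- A function on `V(traceColon π x K)` which is nonzero at `y` and vanishes outside `V` agrees on
`V(K)` with a function on `Y`. -/
theorem exists_mem_basicOpen_inf_support_subset (π : X ⟶ Y) [IsAffine X] [IsFinite π] [Surjective π]
    [IsNoetherian Y] [IsReduced Y] (H : ∀ J : Y.IdealSheafData, J ≠ ⊥ → IsAffine J.subscheme)
    (hI : I ≠ ⊥) {y : Y} (hy : y ∈ I.support) {V : Y.Opens} (hyV : y ∈ V) :
    ∃ f : Γ(Y, ⊤), y ∈ Y.basicOpen f ∧ ∀ p ∈ I.support, p ∈ Y.basicOpen f → p ∈ V := by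
  obtain ⟨x, K, hKI, hK, hJ⟩ := exists_traceColon_ne_bot π hI
  have := H _ hJ
  have hmem {p : Y} (hp : p ∈ I.support) : ∃ w, K.subschemeι w = p := by
    change p ∈ Set.range K.subschemeι
    rw [K.range_subschemeι]
    exact IdealSheafData.support_antitone hKI hp
  have hι (w : K.subscheme) : (traceColon π x K).subschemeι
      (IdealSheafData.inclusion traceColon_le w) = K.subschemeι w := by
    rw [← Hom.comp_apply, IdealSheafData.inclusion_subschemeι]
  obtain ⟨w, rfl⟩ := hmem hy
  obtain ⟨β, hβV, hwβ⟩ := (isAffineOpen_top (traceColon π x K).subscheme).exists_basicOpen_le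
    (V := (traceColon π x K).subschemeι ⁻¹ᵁ V) ⟨_, (hι w).symm ▸ hyV⟩ trivial
  obtain ⟨f, hf⟩ := exists_appTop_eq_of_traceColon hK β
  have hpre := preimage_basicOpen_of_appTop_eq traceColon_le hf
  refine ⟨f, hpre.ge hwβ, fun p hp hpf ↦ ?_⟩
  obtain ⟨w', rfl⟩ := hmem hp
  exact hι w' ▸ hβV (hpre.le hpf)

theorem exists_isAffineOpen_basicOpen_of_isClosed (π : X ⟶ Y) [IsAffine X] [IsFinite π]
    [Surjective π] [IsNoetherian Y] [IsReduced Y]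
    (H : ∀ J : Y.IdealSheafData, J ≠ ⊥ → IsAffine J.subscheme) {y : Y} (hy : IsClosed {y}) :
    ∃ s : Γ(Y, ⊤), IsAffineOpen (Y.basicOpen s) ∧ y ∈ Y.basicOpen s := by
  obtain ⟨V, hyV, -⟩ := exists_mem_affineOpens (Opens.mem_top y)
  let Z : Closeds Y := ⟨(V.1 : Set Y)ᶜ ∪ {y}, V.1.isOpen.isClosed_compl.union hy⟩
  have hsupp : (IdealSheafData.vanishingIdeal Z).support = Z :=
    SetLike.coe_injective (IdealSheafData.coe_support_vanishingIdeal Z)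
  by_cases hZ : IdealSheafData.vanishingIdeal Z = ⊥
  · have hVy : (V.1 : Set Y) = {y} := by
      rw [hZ, IdealSheafData.support_bot] at hsupp
      refine Set.Subset.antisymm (fun p hp ↦ ?_) (by simpa using hyV)
      exact (hsupp.le trivial : p ∈ Z).resolve_left fun h ↦ h hp
    obtain ⟨s, hs⟩ := exists_basicOpen_eq_of_isClosed V.1 (hVy ▸ hy)
    exact ⟨s, hs ▸ V.2, hs ▸ hyV⟩
  · obtain ⟨f, hyf, hf⟩ :=
      exists_mem_basicOpen_inf_support_subset π H hZ (hsupp.ge (Or.inr rfl)) hyV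
    refine ⟨f, isAffineOpen_basicOpen_of_le V.2 f fun p hp ↦ ?_, hyf⟩
    by_contra hpV
    exact hpV (hf p (hsupp.ge (Or.inl hpV)) hp)

theorem exists_isAffineOpen_basicOpen (π : X ⟶ Y) [IsAffine X] [IsFinite π]
    [Surjective π] [IsNoetherian Y] [IsReduced Y]
    (H : ∀ J : Y.IdealSheafData, J ≠ ⊥ → IsAffine J.subscheme) (y : Y) :
    ∃ s : Γ(Y, ⊤), IsAffineOpen (Y.basicOpen s) ∧ y ∈ Y.basicOpen s := by
  obtain ⟨z, hz, hcl⟩ := (isClosed_closure (s := {y})).exists_closed_singleton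
    (Set.singleton_nonempty y).closure
  obtain ⟨s, hs, hzs⟩ := exists_isAffineOpen_basicOpen_of_isClosed π H hcl
  exact ⟨s, hs, (specializes_iff_mem_closure.mpr hz).mem_open (Y.basicOpen s).isOpen hzs⟩

theorem inclusion_appTop_subschemeι_appTop {J : Y.IdealSheafData} (h : J ≤ I) (s : Γ(Y, ⊤)) :
    (IdealSheafData.inclusion h).appTop (J.subschemeι.appTop s) = I.subschemeι.appTop s := by
  rw [← CommRingCat.comp_apply, ← Hom.comp_appTop, IdealSheafData.inclusion_subschemeι]

theorem exists_mem_span_subschemeι_appTop_eq_one (π : X ⟶ Y) [IsAffine X] [IsFinite π]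
    [Surjective π] [IsNoetherian Y] [IsReduced Y]
    (H : ∀ J : Y.IdealSheafData, J ≠ ⊥ → IsAffine J.subscheme) {S : Set Γ(Y, ⊤)}
    (hS : ∀ y, ∃ s ∈ S, y ∈ Y.basicOpen s) (hI : I ≠ ⊥) :
    ∃ f ∈ Ideal.span S, I.subschemeι.appTop (1 - f) = 0 := by
  obtain ⟨x, K, hKI, hK, hJ⟩ := exists_traceColon_ne_bot π hI
  have := H _ hJ
  obtain ⟨t, ht, a, ha⟩ := exists_sum_mul_appTop_eq_one (traceColon π x K).subschemeι hS
  choose g hg using fun s ↦ exists_appTop_eq_of_traceColon hK (a s)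
  have hKf : K.subschemeι.appTop (1 - ∑ s, g s * s.1) = 0 := by
    have hsum := congr_arg (IdealSheafData.inclusion traceColon_le).appTop ha
    simp only [map_sum, map_mul, inclusion_appTop_subschemeι_appTop, ← hg, map_one] at hsum
    rw [map_sub, map_one, map_sum, sub_eq_zero]
    simp only [map_mul]
    exact hsum.symm
  refine ⟨∑ s, g s * s.1, sum_mem fun s _ ↦ Ideal.mul_mem_left _ _ (Ideal.subset_span (ht s.2)),
    subschemeι_appTop_eq_zero_iff.mpr fun U ↦ hKI U (subschemeι_appTop_eq_zero_iff.mp hKf U)⟩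

theorem isAffine_of_forall_isAffine_subscheme (π : X ⟶ Y) [IsAffine X] [IsFinite π] [Surjective π]
    [IsNoetherian Y] [IsReduced Y] (H : ∀ J : Y.IdealSheafData, J ≠ ⊥ → IsAffine J.subscheme) :
    IsAffine Y := by
  cases isEmpty_or_nonempty Y
  · infer_instance
  have htop : (⊤ : Y.IdealSheafData) ≠ ⊥ := fun h ↦ by
    have hsupp := congr_arg IdealSheafData.support h
    rw [IdealSheafData.support_top, IdealSheafData.support_bot] at hsupp
    exact (hsupp.ge trivial : Classical.arbitrary Y ∈ (⊥ : Closeds Y))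
  have hS := exists_isAffineOpen_basicOpen π H
  obtain ⟨x, I, -, hI, hJ⟩ := exists_traceColon_ne_bot π htop
  obtain ⟨f, hf, h1f⟩ := exists_mem_span_subschemeι_appTop_eq_one π H hS hJ
  refine isAffine_of_isAffineOpen_basicOpen {s | IsAffineOpen (Y.basicOpen s)} ?_ fun _ h ↦ h
  rw [Ideal.eq_top_iff_one, ← sub_add_cancel 1 f]
  exact add_mem (mem_span_of_traceColon hI h1f hS) hf

end Reduced

section Chevalley

theorem wellFoundedGT_idealSheafData (Y : Scheme.{u}) [IsNoetherian Y] :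
    WellFoundedGT Y.IdealSheafData := by
  obtain ⟨s, hs⟩ := exists_finite_affineOpens_cover Y
  have (U : s) : WellFoundedLT (Ideal Γ(Y, U.1))ᵒᵈ := by
    have : IsNoetherianRing Γ(Y, U.1) := IsLocallyNoetherian.component_noetherian U.1
    have : WellFoundedGT (Ideal Γ(Y, U.1)) := inferInstanceAs (WellFoundedGT (Submodule _ _))
    infer_instance
  let F (I : Y.IdealSheafData) (U : s) : (Ideal Γ(Y, U.1))ᵒᵈ := OrderDual.toDual (I.ideal U.1)
  have hanti : Antitone F := fun I J h U ↦ h U.1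
  have hinj : Function.Injective F := fun I J h ↦
    IdealSheafData.ext_of_iSup_eq_top (fun U : s ↦ U.1) hs fun U ↦ congr_fun h U
  exact (hanti.strictAnti_of_injective hinj).wellFoundedGT

theorem ker_lt_ker_subschemeι_comp {Y Z : Scheme.{u}} (i : Z ⟶ Y) [IsClosedImmersion i]
    {J : Z.IdealSheafData} (hJ : J ≠ ⊥) : i.ker < (J.subschemeι ≫ i).ker := by
  refine (Hom.le_ker_comp J.subschemeι i).lt_of_ne fun h ↦ hJ ?_
  have hsection : IsClosedImmersion.lift (J.subschemeι ≫ i) i h.ge ≫ J.subschemeι = 𝟙 Z := by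
    rw [← cancel_mono i, Category.assoc, IsClosedImmersion.lift_fac, Category.id_comp]
  have : IsSplitEpi J.subschemeι := ⟨⟨_, hsection⟩⟩
  rw [← isIso_subschemeι_iff_eq_bot]
  exact isIso_of_mono_of_isSplitEpi _

theorem noetherian_induction_closedImmersion {Y : Scheme.{u}} [IsNoetherian Y]
    {P : Scheme.{u} → Prop} (step : ∀ (Z : Scheme.{u}) (i : Z ⟶ Y) [IsClosedImmersion i],
      (∀ J : Z.IdealSheafData, J ≠ ⊥ → P J.subscheme) → P Z) : P Y := by
  have := wellFoundedGT_idealSheafData Y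
  suffices ∀ (I : Y.IdealSheafData) (Z : Scheme.{u}) (i : Z ⟶ Y) [IsClosedImmersion i],
      i.ker = I → P Z from this _ Y (𝟙 Y) rfl
  intro I
  induction I using WellFoundedGT.induction with
  | ind I ih =>
    rintro Z i _ rfl
    exact step Z i fun J hJ ↦ ih _ (ker_lt_ker_subschemeι_comp i hJ) _ (J.subschemeι ≫ i) rfl

theorem isAffine_of_isFinite_of_surjective {X Y : Scheme.{u}} (π : X ⟶ Y) [IsAffine X]
    [IsFinite π] [Surjective π] [IsNoetherian Y] : IsAffine Y := by
  refine noetherian_induction_closedImmersion (Y := Y) (P := fun Z ↦ IsAffine Z) fun Z i _ H ↦ ?_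
  have : IsLocallyNoetherian Z := LocallyOfFiniteType.isLocallyNoetherian i
  have : CompactSpace Z := QuasiCompact.compactSpace_of_compactSpace i
  have : IsNoetherian Z := {}
  by_cases hZ : IsReduced Z
  · have : IsAffine (Limits.pullback π i) := isAffine_of_isAffineHom (Limits.pullback.fst π i)
    exact isAffine_of_forall_isAffine_subscheme (Limits.pullback.snd π i) H
  · obtain ⟨I, hI, hI2⟩ := exists_mul_self_eq_bot hZ
    have := H I hI
    exact isAffine_of_mul_self_eq_bot hI2

end Chevalley

end

theorem isAffine_of_finite_surjective_from_weightedProj_basicOpen_general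
    {A σ : Type*} [CommRing A] [SetLike σ A] [AddSubgroupClass σ A] (𝒜 : ℕ → σ) [GradedRing 𝒜]
    {f : A} {m : ℕ} (hm : 0 < m) (hf : f ∈ 𝒜 m) {Y : Scheme}
    (g : Scheme.Opens.toScheme (X := Proj 𝒜) (ProjectiveSpectrum.basicOpen 𝒜 f) ⟶ Y)
    [IsFinite g] [Surjective g] [IsNoetherian Y] : IsAffine Y := by
  have : IsAffine (Scheme.Opens.toScheme (X := Proj 𝒜) (ProjectiveSpectrum.basicOpen 𝒜 f)) :=
    Proj.isAffineOpen_basicOpen 𝒜 f hf hm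
  exact isAffine_of_isFinite_of_surjective g

/-- Let `U = D₊(f)` be the complement of the hypersurface `V₊(f)` in the weighted projective
space `Proj k[X_0, …, X_n]` (where `X_i` has weight `d i ≥ 1` and `f` is weighted homogeneous
of positive weighted degree `m`).  If a noetherian scheme `Y` admits a finite surjective
morphism `U ⟶ Y`, then `Y` is affine. -/
theorem isAffine_of_finite_surjective_from_weightedProj_basicOpen
    (k : Type*) [Field k] (n : ℕ) (d : Fin (n + 1) → ℕ) (hd : ∀ i, 1 ≤ d i)
    (f : MvPolynomial (Fin (n + 1)) k) (m : ℕ) (hm : 0 < m)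
    (hf : f ∈ weightedHomogeneousSubmodule k d m)
    (Y : Scheme)
    (g : Scheme.Opens.toScheme
      (X := Proj (weightedHomogeneousSubmodule k d))
      (ProjectiveSpectrum.basicOpen (weightedHomogeneousSubmodule k d) f) ⟶ Y)
    [IsFinite g] (hg : Function.Surjective g.base) [IsNoetherian Y] :
    IsAffine Y := by
  have : Surjective g := ⟨hg⟩
  exact isAffine_of_finite_surjective_from_weightedProj_basicOpen_general _ hm hf g
end
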